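/- Ergodic properties of the (N+1)-dimensional problem. Assume (H1)–(H4). Let η ≥ 0, a₀ ∈ ℝ, L ∈ ℝ, p ∈ ℝ^N and P = (p,1) ∈ ℝ^{N+1}. Let U_η ∈ C_b(ℝ⁺×ℝ^{N+1}) be the viscosity solution of ∂_τ U = L + I_s[U(τ,·,y_{N+1})] − W'(U + P·Y) + σ(τ,y) + η[a₀ + inf_{Y'} U(τ,Y') − U(τ,Y)]·|∂_{y_{N+1}}U + 1| on ℝ⁺×ℝ^{N+1} with U(0,Y)=0, where Y=(y,y_{N+1}) and I_s acts on the y-variable only. Then there exists a unique λ_η = λ_η(p,L) ∈ ℝ such that |U_η(τ,Y) − λ_η τ| ≤ C for all τ > 0 and Y ∈ ℝ^{N+1}, with C independent of η. Moreover L − ‖W'‖_∞ − ‖σ‖_∞ + ηa₀ ≤ λ_η ≤ L + ‖W'‖_∞ + ‖σ‖_∞ + ηa₀. -/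

import Mathlib

/-!
The proof compares the solution `U` with its own translates. The equation is invariant under integer
time shifts, under lattice translations in `y` corrected by a shift of `y_{N+1}`, under integer
shifts of `y_{N+1}`, and under `U ↦ U(·, · + h) + h` in the variable `y_{N+1}`. With the comparison
principle this makes `U` periodic up to a shear and `y_{N+1} ↦ U + y_{N+1}` nondecreasing, so that
the oscillation of `U` in `y_{N+1}` is at most one.

The comparison principle is proved by doubling the variables. Since nothing is known about the
behaviour of solutions at infinity, suprema are turned into maxima by adding a small smooth bump,
which, unlike a growing penalisation, costs only `O(δ)` in every term of the equation. The same
device yields linear barriers, which bound the growth of `U` by `L ± (‖W'‖_∞ + ‖σ‖_∞) + η a₀`.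

The key estimate bounds the oscillation of `U(t, ·)` over all of `ℝ^{N+1}` by a constant depending
on `N`, `s`, `g`, `‖W'‖_∞` and `‖σ‖_∞` only. At points where `U(t, ·)` is maximal and minimal the
terms in `η` can be discarded, and a large oscillation would make the difference of the two nonlocal
terms very negative, because the kernel is bounded below on compact sets away from the origin.

Shifting time by an integer and subtracting an integer then shows that `k ↦ U(k, 0)` is additive up
to a constant, and Fekete's lemma gives the slope. The barriers bound the slope and control
non-integer times.
-/

open MeasureTheory Filter Metric Set RealInnerProductSpace

noncomputable section

/-- `ℝ^N` as a Euclidean space. -/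
abbrev EN (N : ℕ) := EuclideanSpace ℝ (Fin N)

/-- The singular kernel `g(z/|z|) |z|^{-N-2s}` of the anisotropic Lévy operator. -/
noncomputable def levyKernel (N : ℕ) (s : ℝ) (g : EN N → ℝ) (z : EN N) : ℝ :=
  g (‖z‖⁻¹ • z) * ‖z‖ ^ (-(N : ℝ) - 2 * s)

/-- `I^{1,r}[φ, x]`: integral over `|z| ≤ r` of the second order increment of `φ`. -/
noncomputable def levyI1 (N : ℕ) (s : ℝ) (g : EN N → ℝ) (φ : EN N → ℝ) (r : ℝ) (x : EN N) : ℝ :=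
  ∫ z in {z : EN N | ‖z‖ ≤ r}, (φ (x + z) - φ x - fderiv ℝ φ x z) * levyKernel N s g z

/-- `I^{2,r}[u, x]`: integral over `|z| > r` of the increment of `u`. -/
noncomputable def levyI2 (N : ℕ) (s : ℝ) (g : EN N → ℝ) (u : EN N → ℝ) (r : ℝ) (x : EN N) : ℝ :=
  ∫ z in {z : EN N | r < ‖z‖}, (u (x + z) - u x) * levyKernel N s g z

/-- The anisotropic Lévy operator `I_s` of order `2s`, defined as a principal value. -/
noncomputable def levyOp (N : ℕ) (s : ℝ) (g : EN N → ℝ) (φ : EN N → ℝ) (x : EN N) : ℝ :=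
  limUnder (nhdsWithin 0 (Ioi (0:ℝ)))
    (fun ρ => ∫ y in {y : EN N | ρ < ‖y‖}, (φ (x + y) - φ x) * levyKernel N s g y)

/-- (H1): `g` is continuous, positive on the sphere and even. -/
def H1 (N : ℕ) (g : EN N → ℝ) : Prop :=
  Continuous g ∧ (∀ z : EN N, ‖z‖ = 1 → 0 < g z) ∧ (∀ z : EN N, g (-z) = g z)

/-- (H2): `W ∈ C^{1,1}(ℝ)` and `W(v+1) = W(v)`. -/
def H2 (W : ℝ → ℝ) : Prop :=
  ContDiff ℝ 1 W ∧ (∃ K : NNReal, LipschitzWith K (deriv W)) ∧ ∀ v, W (v + 1) = W v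

/-- (H3): `σ ∈ C^{0,1}(ℝ⁺ × ℝ^N)`, 1-periodic in `t` and ℤ^N-periodic in `x`. -/
def H3 (N : ℕ) (σ : ℝ → EN N → ℝ) : Prop :=
  (∃ K : NNReal, LipschitzWith K (fun q : ℝ × EN N => σ q.1 q.2)) ∧
  (∀ t x, σ (t + 1) x = σ t x) ∧
  (∀ (k : Fin N → ℤ) (t : ℝ) (x : EN N), σ t (x + (WithLp.equiv 2 (Fin N → ℝ)).symm (fun j => (k j : ℝ))) = σ t x)

/-- (H4): `u₀ ∈ W^{2,∞}(ℝ^N)`. -/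
def H4 (N : ℕ) (u₀ : EN N → ℝ) : Prop :=
  ContDiff ℝ 2 u₀ ∧
  ∃ M, ∀ x, |u₀ x| ≤ M ∧ ‖fderiv ℝ u₀ x‖ ≤ M ∧ ‖fderiv ℝ (fderiv ℝ u₀) x‖ ≤ M

/-- Boundedness on `(0,T) × ℝ^N` for every `T > 0`. -/
def LocBddPos (N : ℕ) (u : ℝ → EN N → ℝ) : Prop :=
  ∀ T > 0, ∃ M, ∀ t ∈ Ioc (0:ℝ) T, ∀ x, |u t x| ≤ M

/-- Viscosity subsolution of `∂_t u = F(t, x, u, ∇_x u, I_s[u(t,·)])` with initial datum `u₀`. -/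
def IsSubsol (N : ℕ) (s : ℝ) (g : EN N → ℝ)
    (F : ℝ → EN N → ℝ → (EN N →L[ℝ] ℝ) → ℝ → ℝ)
    (u₀ : EN N → ℝ) (u : ℝ → EN N → ℝ) : Prop :=
  UpperSemicontinuousOn (fun q : ℝ × EN N => u q.1 q.2) (Ici 0 ×ˢ univ) ∧
  LocBddPos N u ∧
  (∀ x, u 0 x ≤ u₀ x) ∧
  ∀ (t₀ : ℝ) (x₀ : EN N), 0 < t₀ →
    ∀ (φ : ℝ → EN N → ℝ), ContDiff ℝ 2 (fun q : ℝ × EN N => φ q.1 q.2) →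
    ∀ τ r : ℝ, 0 < τ → τ < t₀ → 0 < r →
    (∀ t x, t ∈ Ioo (t₀ - τ) (t₀ + τ) → x ∈ ball x₀ r →
      u t x - φ t x ≤ u t₀ x₀ - φ t₀ x₀) →
    deriv (fun t => φ t x₀) t₀ -
      F t₀ x₀ (u t₀ x₀) (fderiv ℝ (fun x => φ t₀ x) x₀)
        (levyI1 N s g (fun x => φ t₀ x) r x₀ + levyI2 N s g (fun x => u t₀ x) r x₀) ≤ 0

/-- Viscosity supersolution of `∂_t u = F(t, x, u, ∇_x u, I_s[u(t,·)])` with initial datum `u₀`. -/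
def IsSupersol (N : ℕ) (s : ℝ) (g : EN N → ℝ)
    (F : ℝ → EN N → ℝ → (EN N →L[ℝ] ℝ) → ℝ → ℝ)
    (u₀ : EN N → ℝ) (u : ℝ → EN N → ℝ) : Prop :=
  LowerSemicontinuousOn (fun q : ℝ × EN N => u q.1 q.2) (Ici 0 ×ˢ univ) ∧
  LocBddPos N u ∧
  (∀ x, u₀ x ≤ u 0 x) ∧
  ∀ (t₀ : ℝ) (x₀ : EN N), 0 < t₀ →
    ∀ (φ : ℝ → EN N → ℝ), ContDiff ℝ 2 (fun q : ℝ × EN N => φ q.1 q.2) →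
    ∀ τ r : ℝ, 0 < τ → τ < t₀ → 0 < r →
    (∀ t x, t ∈ Ioo (t₀ - τ) (t₀ + τ) → x ∈ ball x₀ r →
      u t₀ x₀ - φ t₀ x₀ ≤ u t x - φ t x) →
    0 ≤ deriv (fun t => φ t x₀) t₀ -
      F t₀ x₀ (u t₀ x₀) (fderiv ℝ (fun x => φ t₀ x) x₀)
        (levyI1 N s g (fun x => φ t₀ x) r x₀ + levyI2 N s g (fun x => u t₀ x) r x₀)

/-- Viscosity solution in `C_b(ℝ⁺ × ℝ^N)`. -/
def IsSol (N : ℕ) (s : ℝ) (g : EN N → ℝ)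
    (F : ℝ → EN N → ℝ → (EN N →L[ℝ] ℝ) → ℝ → ℝ)
    (u₀ : EN N → ℝ) (u : ℝ → EN N → ℝ) : Prop :=
  ContinuousOn (fun q : ℝ × EN N => u q.1 q.2) (Ici 0 ×ˢ univ) ∧
  IsSubsol N s g F u₀ u ∧ IsSupersol N s g F u₀ u

/-- The right-hand side of the cell problem
`∂_τ w = I_s[w(τ,·)] + L − W'(w + p·y) + σ(τ,y)`. -/
def cellF (N : ℕ) (W : ℝ → ℝ) (σ : ℝ → EN N → ℝ) (p : EN N) (L : ℝ) :
    ℝ → EN N → ℝ → (EN N →L[ℝ] ℝ) → ℝ → ℝ :=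
  fun τ y v _ I => I + L - deriv W (v + ⟪p, y⟫) + σ τ y

/-- `w(τ,y)/τ → lam` as `τ → +∞`, locally uniformly in `y`. -/
def SlopeLim (N : ℕ) (w : ℝ → EN N → ℝ) (lam : ℝ) : Prop :=
  ∀ ε > 0, ∀ R > 0, ∃ T : ℝ, ∀ τ, T ≤ τ → ∀ y : EN N, ‖y‖ ≤ R → |w τ y / τ - lam| ≤ ε

end

noncomputable section

/-- Viscosity subsolution of the `(N+1)`-dimensional problem
`∂_t U = F(t, y, y_{N+1}, U, ∇_y φ, ∂_{y_{N+1}} φ, I_s-term, inf_{Y'} U(t,Y'))`,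
where `I_s` acts on the `y`-variable only, with initial datum `U₀`. -/
def IsSubsolNp1 (N : ℕ) (s : ℝ) (g : EN N → ℝ)
    (F : ℝ → EN N → ℝ → ℝ → (EN N →L[ℝ] ℝ) → ℝ → ℝ → ℝ → ℝ)
    (U₀ : EN N → ℝ → ℝ) (U : ℝ → EN N → ℝ → ℝ) : Prop :=
  UpperSemicontinuousOn (fun q : ℝ × EN N × ℝ => U q.1 q.2.1 q.2.2) (Ici 0 ×ˢ univ) ∧
  (∀ T > 0, ∃ M, ∀ t ∈ Ioc (0:ℝ) T, ∀ (y : EN N) (yn : ℝ), |U t y yn| ≤ M) ∧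
  (∀ y yn, U 0 y yn ≤ U₀ y yn) ∧
  ∀ (t₀ : ℝ) (y₀ : EN N) (yn₀ : ℝ), 0 < t₀ →
    ∀ (φ : ℝ → EN N → ℝ → ℝ),
      ContDiff ℝ 2 (fun q : ℝ × EN N × ℝ => φ q.1 q.2.1 q.2.2) →
    ∀ τ r : ℝ, 0 < τ → τ < t₀ → 0 < r →
    (∀ t y yn, t ∈ Ioo (t₀ - τ) (t₀ + τ) → ‖y - y₀‖ < r → |yn - yn₀| < r →
      U t y yn - φ t y yn ≤ U t₀ y₀ yn₀ - φ t₀ y₀ yn₀) →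
    deriv (fun t => φ t y₀ yn₀) t₀ -
      F t₀ y₀ yn₀ (U t₀ y₀ yn₀)
        (fderiv ℝ (fun y => φ t₀ y yn₀) y₀)
        (deriv (fun yn => φ t₀ y₀ yn) yn₀)
        (levyI1 N s g (fun y => φ t₀ y yn₀) r y₀ + levyI2 N s g (fun y => U t₀ y yn₀) r y₀)
        (⨅ q : EN N × ℝ, U t₀ q.1 q.2) ≤ 0

/-- Viscosity supersolution of the `(N+1)`-dimensional problem. -/
def IsSupersolNp1 (N : ℕ) (s : ℝ) (g : EN N → ℝ)
    (F : ℝ → EN N → ℝ → ℝ → (EN N →L[ℝ] ℝ) → ℝ → ℝ → ℝ → ℝ)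
    (U₀ : EN N → ℝ → ℝ) (U : ℝ → EN N → ℝ → ℝ) : Prop :=
  LowerSemicontinuousOn (fun q : ℝ × EN N × ℝ => U q.1 q.2.1 q.2.2) (Ici 0 ×ˢ univ) ∧
  (∀ T > 0, ∃ M, ∀ t ∈ Ioc (0:ℝ) T, ∀ (y : EN N) (yn : ℝ), |U t y yn| ≤ M) ∧
  (∀ y yn, U₀ y yn ≤ U 0 y yn) ∧
  ∀ (t₀ : ℝ) (y₀ : EN N) (yn₀ : ℝ), 0 < t₀ →
    ∀ (φ : ℝ → EN N → ℝ → ℝ),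
      ContDiff ℝ 2 (fun q : ℝ × EN N × ℝ => φ q.1 q.2.1 q.2.2) →
    ∀ τ r : ℝ, 0 < τ → τ < t₀ → 0 < r →
    (∀ t y yn, t ∈ Ioo (t₀ - τ) (t₀ + τ) → ‖y - y₀‖ < r → |yn - yn₀| < r →
      U t₀ y₀ yn₀ - φ t₀ y₀ yn₀ ≤ U t y yn - φ t y yn) →
    0 ≤ deriv (fun t => φ t y₀ yn₀) t₀ -
      F t₀ y₀ yn₀ (U t₀ y₀ yn₀)
        (fderiv ℝ (fun y => φ t₀ y yn₀) y₀)
        (deriv (fun yn => φ t₀ y₀ yn) yn₀)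
        (levyI1 N s g (fun y => φ t₀ y yn₀) r y₀ + levyI2 N s g (fun y => U t₀ y yn₀) r y₀)
        (⨅ q : EN N × ℝ, U t₀ q.1 q.2)

/-- Viscosity solution (continuous, bounded on finite time intervals) of the
`(N+1)`-dimensional problem. -/
def IsSolNp1 (N : ℕ) (s : ℝ) (g : EN N → ℝ)
    (F : ℝ → EN N → ℝ → ℝ → (EN N →L[ℝ] ℝ) → ℝ → ℝ → ℝ → ℝ)
    (U₀ : EN N → ℝ → ℝ) (U : ℝ → EN N → ℝ → ℝ) : Prop :=
  ContinuousOn (fun q : ℝ × EN N × ℝ => U q.1 q.2.1 q.2.2) (Ici 0 ×ˢ univ) ∧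
  IsSubsolNp1 N s g F U₀ U ∧ IsSupersolNp1 N s g F U₀ U

/-- `‖W'‖_∞`. -/
noncomputable def supW' (W : ℝ → ℝ) : ℝ := ⨆ v : ℝ, |deriv W v|

/-- `‖σ‖_∞` (over `ℝ⁺ × ℝ^N`). -/
noncomputable def supSigma (N : ℕ) (σ : ℝ → EN N → ℝ) : ℝ :=
  sSup {r : ℝ | ∃ t x, 0 ≤ t ∧ r = |σ t x|}

end

/-! ### The Lévy kernel -/

/-- The properties of the Lévy kernel that the argument uses: it is a nonnegative Lévy measure
density, and it is bounded below on annuli of inner radius one. -/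
structure IsLevyKernel (N : ℕ) (s : ℝ) (g : EN N → ℝ) : Prop where
  nonneg : ∀ z, 0 ≤ levyKernel N s g z
  integrableOn_near :
    IntegrableOn (fun z => ‖z‖ ^ 2 * levyKernel N s g z) {z : EN N | ‖z‖ ≤ 1}
  integrableOn_far : ∀ r > 0, IntegrableOn (levyKernel N s g) {z : EN N | r < ‖z‖}
  exists_le : ∀ R : ℝ, ∃ κ > 0, ∀ z : EN N, 1 ≤ ‖z‖ → ‖z‖ ≤ R → κ ≤ levyKernel N s g z

namespace H1

variable {N : ℕ} {s : ℝ} {g : EN N → ℝ}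

lemma levyKernel_pos (hg : H1 N g) {z : EN N} (hz : z ≠ 0) : 0 < levyKernel N s g z := by
  have hunit : ‖(‖z‖⁻¹ • z)‖ = 1 := norm_smul_inv_norm (𝕜 := ℝ) hz
  exact mul_pos (hg.2.1 _ hunit) (Real.rpow_pos_of_pos (norm_pos_iff.2 hz) _)

lemma levyKernel_nonneg (hg : H1 N g) (hs : 0 < s) (z : EN N) : 0 ≤ levyKernel N s g z := by
  rcases eq_or_ne z 0 with rfl | hz
  · have hexp : -(N : ℝ) - 2 * s ≠ 0 := by linarith [N.cast_nonneg (α := ℝ)]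
    simp [levyKernel, Real.zero_rpow hexp]
  · exact (hg.levyKernel_pos hz).le

lemma measurable_levyKernel (hg : H1 N g) : Measurable (levyKernel N s g) := by
  have := hg.1.measurable
  unfold levyKernel
  fun_prop

lemma continuousOn_levyKernel (hg : H1 N g) : ContinuousOn (levyKernel N s g) {0}ᶜ := by
  have hnorm : ∀ z ∈ ({0}ᶜ : Set (EN N)), ‖z‖ ≠ 0 := fun z hz => norm_ne_zero_iff.2 hz
  unfold levyKernel
  exact (hg.1.comp_continuousOn ((continuousOn_id.norm.inv₀ hnorm).smul continuousOn_id)).mul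
    (continuousOn_id.norm.rpow_const fun z hz => .inl (hnorm z hz))

lemma exists_levyKernel_le (hg : H1 N g) (s : ℝ) :
    ∃ G : ℝ, 0 ≤ G ∧ ∀ z : EN N, levyKernel N s g z ≤ G * ‖z‖ ^ (-((N : ℝ) + 2 * s)) := by
  obtain ⟨G, hG⟩ := (isCompact_closedBall (0 : EN N) 1).exists_bound_of_continuousOn
    hg.1.continuousOn
  refine ⟨max G 0, le_max_right _ _, fun z => ?_⟩
  have hz : ‖z‖⁻¹ • z ∈ closedBall (0 : EN N) 1 := by
    rw [mem_closedBall_zero_iff, norm_smul, norm_inv, norm_norm]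
    exact inv_mul_le_one
  rw [levyKernel, neg_add']
  gcongr
  exact ((le_abs_self _).trans (hG _ hz)).trans (le_max_left _ _)

lemma integrableOn_levyKernel_far (hg : H1 N g) (hs : 0 < s) {r : ℝ} (hr : 0 < r) :
    IntegrableOn (levyKernel N s g) {z : EN N | r < ‖z‖} := by
  obtain ⟨G, hG0, hG⟩ := hg.exists_levyKernel_le s
  have hdim : (Module.finrank ℝ (EN N) : ℝ) < N + 2 * s := by simpa using hs
  have hms : MeasurableSet {z : EN N | r < ‖z‖} := measurableSet_lt measurable_const measurable_norm
  refine Integrable.mono' (g := fun z => G * (r / (1 + r)) ^ (-((N : ℝ) + 2 * s)) *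
      (1 + ‖z‖) ^ (-((N : ℝ) + 2 * s))) ((integrable_one_add_norm hdim).const_mul _).restrict
    hg.measurable_levyKernel.aestronglyMeasurable ?_
  refine (ae_restrict_iff' hms).2 (Eventually.of_forall fun z (hz : r < ‖z‖) => ?_)
  rw [Real.norm_of_nonneg (hg.levyKernel_nonneg hs z), mul_assoc,
    ← Real.mul_rpow (by positivity) (by positivity)]
  refine (hG z).trans (mul_le_mul_of_nonneg_left ?_ hG0)
  refine Real.rpow_le_rpow_of_nonpos (by positivity) ?_ (neg_nonpos.2 (by positivity))
  rw [div_mul_eq_mul_div, div_le_iff₀ (by positivity)]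
  linarith

lemma integrableOn_levyKernel_near (hg : H1 N g) (hN : 1 ≤ N) (hs : s ∈ Ioo (0 : ℝ) 1) :
    IntegrableOn (fun z => ‖z‖ ^ 2 * levyKernel N s g z) {z : EN N | ‖z‖ ≤ 1} := by
  obtain ⟨G, hG0, hG⟩ := hg.exists_levyKernel_le s
  have hdecay : ∀ z : EN N,
      ‖‖z‖ ^ 2 * levyKernel N s g z‖ ≤ G * ‖z‖ ^ (-((N : ℝ) + 2 * s - 2)) := by
    intro z
    rw [Real.norm_of_nonneg (mul_nonneg (by positivity) (hg.levyKernel_nonneg hs.1 z))]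
    rcases eq_or_ne z 0 with rfl | hz
    · rw [norm_zero, zero_pow two_ne_zero, zero_mul]
      positivity
    · calc ‖z‖ ^ 2 * levyKernel N s g z
          ≤ ‖z‖ ^ 2 * (G * ‖z‖ ^ (-((N : ℝ) + 2 * s))) := by gcongr; exact hG z
        _ = G * ‖z‖ ^ (-((N : ℝ) + 2 * s - 2)) := by
            rw [neg_sub, sub_eq_add_neg, Real.rpow_add (norm_pos_iff.2 hz), Real.rpow_two]
            ring
  have hmeas := hg.measurable_levyKernel (s := s)
  refine (integrableOn_ball_of_norm_le_rpow (r := 2) (by simpa using hN) ?_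
    (Eventually.of_forall hdecay) (Measurable.aestronglyMeasurable (by fun_prop))).mono_set
    fun z (hz : ‖z‖ ≤ 1) => mem_ball_zero_iff.2 (by linarith)
  rw [finrank_euclideanSpace, Fintype.card_fin]
  linarith [hs.2]

lemma exists_le_levyKernel (hg : H1 N g) (s R : ℝ) :
    ∃ κ > 0, ∀ z : EN N, 1 ≤ ‖z‖ → ‖z‖ ≤ R → κ ≤ levyKernel N s g z := by
  have hcompact : IsCompact (closedBall (0 : EN N) R ∩ {z | 1 ≤ ‖z‖}) :=
    (isCompact_closedBall 0 R).inter_right (isClosed_le continuous_const continuous_norm)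
  have hne : ∀ z ∈ closedBall (0 : EN N) R ∩ {z | 1 ≤ ‖z‖}, z ≠ 0 := fun z hz =>
    norm_pos_iff.1 (one_pos.trans_le hz.2)
  obtain ⟨κ, hκ, hle⟩ := hcompact.exists_forall_le' (hg.continuousOn_levyKernel.mono hne)
    fun z hz => hg.levyKernel_pos (s := s) (hne z hz)
  exact ⟨κ, hκ, fun z h1 hR => hle z ⟨mem_closedBall_zero_iff.2 hR, h1⟩⟩

lemma isLevyKernel (hg : H1 N g) (hN : 1 ≤ N) (hs : s ∈ Ioo (0 : ℝ) 1) : IsLevyKernel N s g where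
  nonneg := hg.levyKernel_nonneg hs.1
  integrableOn_near := hg.integrableOn_levyKernel_near hN hs
  integrableOn_far _ := hg.integrableOn_levyKernel_far hs.1
  exists_le := hg.exists_le_levyKernel s

end H1

/-! ### Estimates of the nonlocal terms -/

/-- The second moment of the Lévy kernel on the ball of radius `r`. -/
noncomputable def nearMass (N : ℕ) (s : ℝ) (g : EN N → ℝ) (r : ℝ) : ℝ :=
  ∫ z in {z : EN N | ‖z‖ ≤ r}, ‖z‖ ^ 2 * levyKernel N s g z

/-- The mass of the Lévy kernel outside the ball of radius `r`. -/
noncomputable def farMass (N : ℕ) (s : ℝ) (g : EN N → ℝ) (r : ℝ) : ℝ :=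
  ∫ z in {z : EN N | r < ‖z‖}, levyKernel N s g z

section LevyOperators

variable {N : ℕ} {s : ℝ} {g : EN N → ℝ}

lemma levyI1_neg (φ : EN N → ℝ) (r : ℝ) (x : EN N) :
    levyI1 N s g (fun y => -φ y) r x = -levyI1 N s g φ r x := by
  simp only [levyI1, ← integral_neg, fderiv_fun_neg, neg_apply]
  congr 1 with z
  ring

lemma levyI2_neg (u : EN N → ℝ) (r : ℝ) (x : EN N) :
    levyI2 N s g (fun y => -u y) r x = -levyI2 N s g u r x := by
  simp only [levyI2, ← integral_neg]
  congr 1 with z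
  ring

lemma levyI2_const (c r : ℝ) (x : EN N) : levyI2 N s g (fun _ => c) r x = 0 := by
  simp [levyI2]

lemma levyI2_comp_add_right_add_const (u : EN N → ℝ) (m : EN N) (c r : ℝ) (x : EN N) :
    levyI2 N s g (fun y => u (y + m) + c) r x = levyI2 N s g u r (x + m) := by
  simp only [levyI2, add_sub_add_right_eq_sub, add_right_comm]

end LevyOperators

namespace IsLevyKernel

variable {N : ℕ} {s : ℝ} {g : EN N → ℝ}

lemma nearMass_nonneg (hk : IsLevyKernel N s g) (r : ℝ) : 0 ≤ nearMass N s g r :=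
  integral_nonneg fun z => mul_nonneg (sq_nonneg ‖z‖) (hk.nonneg z)

lemma farMass_nonneg (hk : IsLevyKernel N s g) (r : ℝ) : 0 ≤ farMass N s g r :=
  integral_nonneg hk.nonneg

lemma tendsto_nearMass (hk : IsLevyKernel N s g) :
    Tendsto (fun n : ℕ => nearMass N s g (1 / ((n : ℝ) + 1))) atTop (nhds 0) := by
  have hinter : ⋂ n : ℕ, {z : EN N | ‖z‖ ≤ 1 / ((n : ℝ) + 1)} = {0} := by
    refine Subset.antisymm (fun z hz => ?_) fun z hz => ?_
    · rw [mem_iInter] at hz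
      simpa using ge_of_tendsto' (tendsto_one_div_add_atTop_nhds_zero_nat (𝕜 := ℝ)) hz
    · rw [mem_singleton_iff.1 hz, mem_iInter]
      intro n
      rw [mem_ofPred_eq, norm_zero]
      positivity
  have hlim := tendsto_setIntegral_of_antitone (μ := (volume : Measure (EN N)))
    (f := fun z => ‖z‖ ^ 2 * levyKernel N s g z)
    (s := fun n : ℕ => {z : EN N | ‖z‖ ≤ 1 / ((n : ℝ) + 1)})
    (fun n => measurableSet_le measurable_norm measurable_const)
    (fun m n hmn z (hz : ‖z‖ ≤ _) => hz.trans (Nat.one_div_le_one_div hmn))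
    ⟨0, by simpa using hk.integrableOn_near⟩
  rwa [hinter, setIntegral_eq_zero_of_forall_eq_zero fun z hz => by
    rw [mem_singleton_iff.1 hz, norm_zero, zero_pow two_ne_zero, zero_mul]] at hlim

lemma exists_nearMass_le (hk : IsLevyKernel N s g) {ε : ℝ} (hε : 0 < ε) :
    ∃ r : ℝ, 0 < r ∧ r ≤ 1 ∧ nearMass N s g r ≤ ε := by
  obtain ⟨n, hn⟩ := (hk.tendsto_nearMass.eventually (Iio_mem_nhds hε)).exists
  exact ⟨1 / ((n : ℝ) + 1), by positivity,
    (div_le_one (by positivity)).2 (by linarith [n.cast_nonneg (α := ℝ)]), hn.le⟩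

lemma abs_levyI1_le (hk : IsLevyKernel N s g) {r : ℝ} (hr : r ≤ 1) {φ : EN N → ℝ} {x : EN N}
    {C : ℝ} (hφ : ∀ z, |φ (x + z) - φ x - fderiv ℝ φ x z| ≤ C * ‖z‖ ^ 2) :
    |levyI1 N s g φ r x| ≤ C * nearMass N s g r := by
  rw [levyI1, nearMass, ← integral_const_mul, ← Real.norm_eq_abs]
  refine norm_integral_le_of_norm_le
    ((hk.integrableOn_near.mono_set fun z (hz : ‖z‖ ≤ r) => hz.trans hr).const_mul C)
    (Eventually.of_forall fun z => ?_)
  rw [norm_mul, Real.norm_eq_abs, Real.norm_of_nonneg (hk.nonneg z), ← mul_assoc]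
  exact mul_le_mul_of_nonneg_right (hφ z) (hk.nonneg z)

lemma integrableOn_increment_mul (hk : IsLevyKernel N s g) {r : ℝ} (hr : 0 < r) {u : EN N → ℝ}
    (hu : Continuous u) {M : ℝ} (hM : ∀ x, |u x| ≤ M) (x : EN N) :
    IntegrableOn (fun z => (u (x + z) - u x) * levyKernel N s g z) {z : EN N | r < ‖z‖} := by
  refine (hk.integrableOn_far r hr).bdd_mul (c := M + M)
    (Continuous.aestronglyMeasurable (by fun_prop)) (Eventually.of_forall fun z => ?_)
  exact (norm_sub_le _ _).trans (add_le_add (hM _) (hM _))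

lemma levyI2_le_add_farMass (hk : IsLevyKernel N s g) {r : ℝ} (hr : 0 < r) {u v : EN N → ℝ}
    (hu : Continuous u) (hv : Continuous v) {M M' : ℝ} (hM : ∀ x, |u x| ≤ M)
    (hM' : ∀ x, |v x| ≤ M') {x x' : EN N} {c : ℝ}
    (hincr : ∀ z, u (x + z) - u x ≤ v (x' + z) - v x' + c) :
    levyI2 N s g u r x ≤ levyI2 N s g v r x' + c * farMass N s g r := by
  have hv_int := hk.integrableOn_increment_mul hr hv hM' x'
  have hc_int := (hk.integrableOn_far r hr).const_mul c
  rw [levyI2, levyI2, farMass, ← integral_const_mul, ← integral_add hv_int hc_int]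
  refine integral_mono (hk.integrableOn_increment_mul hr hu hM x) (hv_int.add hc_int) fun z => ?_
  linear_combination mul_le_mul_of_nonneg_right (hincr z) (hk.nonneg z)

/-- At a maximum point the increments are nonpositive, so all of them but those that land in
`ball c 1` may be discarded. -/
lemma levyI2_le_mul_setIntegral_ball (hk : IsLevyKernel N s g) {κ R : ℝ}
    (hκ : ∀ z : EN N, 1 ≤ ‖z‖ → ‖z‖ ≤ R → κ ≤ levyKernel N s g z) {u : EN N → ℝ}
    (hu : Continuous u) {M : ℝ} (hM : ∀ x, |u x| ≤ M) {x c : EN N} (hmax : ∀ z, u z ≤ u x)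
    (hcx : 2 ≤ ‖c - x‖) (hcR : ‖c - x‖ + 1 ≤ R) :
    levyI2 N s g u 1 x ≤ κ * ∫ z in ball c 1, (u z - u x) := by
  have hms : MeasurableSet {z : EN N | 1 < ‖z‖} :=
    measurableSet_lt measurable_const measurable_norm
  have hball : IntegrableOn (fun z => u z - u x) (ball c 1) :=
    ((hu.sub continuous_const).continuousOn.integrableOn_compact
      (isCompact_closedBall c 1)).mono_set ball_subset_closedBall
  rw [levyI2, ← integral_indicator hms, ← integral_indicator measurableSet_ball,
    ← integral_add_left_eq_self ((ball c 1).indicator fun z => u z - u x) x, ← integral_const_mul]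
  refine integral_mono ((hk.integrableOn_increment_mul one_pos hu hM x).integrable_indicator hms)
    (((hball.integrable_indicator measurableSet_ball).comp_add_left x).const_mul κ) fun z => ?_
  by_cases hz : x + z ∈ ball c 1
  · rw [mem_ball_iff_norm', ← sub_sub] at hz
    have hlow : 1 < ‖z‖ := by linarith [norm_sub_norm_le (c - x) z]
    have hup : ‖z‖ ≤ R := by
      linarith [norm_sub_norm_le z (c - x), norm_sub_rev z (c - x)]
    rw [indicator_of_mem (show z ∈ {z : EN N | 1 < ‖z‖} from hlow)]
    simp only [indicator_of_mem (mem_ball_iff_norm'.2 (by rwa [← sub_sub]) : x + z ∈ ball c 1)]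
    nlinarith [hκ z hlow.le hup, hmax (x + z)]
  · simp only [indicator_of_notMem hz, mul_zero]
    exact indicator_nonpos
      (fun z _ => mul_nonpos_of_nonpos_of_nonneg (sub_nonpos.2 (hmax _)) (hk.nonneg z)) z

/-- If `u - v` is much smaller everywhere than at the extremal points `x`, `x'`, the kernel
detects it on any unit ball at distance at least one from both of them. -/
lemma levyI2_sub_levyI2_le (hk : IsLevyKernel N s g) {κ R : ℝ} (hκ0 : 0 ≤ κ)
    (hκ : ∀ z : EN N, 1 ≤ ‖z‖ → ‖z‖ ≤ R → κ ≤ levyKernel N s g z) {u v : EN N → ℝ}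
    (hu : Continuous u) (hv : Continuous v) {M M' : ℝ} (hM : ∀ x, |u x| ≤ M)
    (hM' : ∀ x, |v x| ≤ M') {x x' c : EN N} (hmax : ∀ z, u z ≤ u x) (hmin : ∀ z, v x' ≤ v z)
    (hcx : 2 ≤ ‖c - x‖) (hcxR : ‖c - x‖ + 1 ≤ R) (hcx' : 2 ≤ ‖c - x'‖)
    (hcxR' : ‖c - x'‖ + 1 ≤ R) {q : ℝ} (hq : ∀ z, (u z - u x) - (v z - v x') ≤ -q) :
    levyI2 N s g u 1 x - levyI2 N s g v 1 x' ≤ -(κ * (volume.real (ball c 1) * q)) := by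
  have hu_le := hk.levyI2_le_mul_setIntegral_ball hκ hu hM hmax hcx hcxR
  have hv_le := hk.levyI2_le_mul_setIntegral_ball (u := fun y => -v y) hκ hv.neg (M := M')
    (by simpa using hM') (fun z => neg_le_neg (hmin z)) hcx' hcxR'
  have hint : ∀ w : EN N → ℝ, Continuous w → IntegrableOn w (ball c 1) := fun w hw =>
    (hw.continuousOn.integrableOn_compact (isCompact_closedBall c 1)).mono_set
      ball_subset_closedBall
  have hball : (∫ z in ball c 1, (u z - u x)) + ∫ z in ball c 1, (-v z - -v x') ≤
      -(volume.real (ball c 1) * q) := by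
    rw [← integral_add (hint _ (by fun_prop)) (hint _ (by fun_prop)), ← mul_neg, ← smul_eq_mul,
      ← setIntegral_const]
    exact setIntegral_mono (hint _ (by fun_prop)) (hint _ (by fun_prop)) fun z => by linarith [hq z]
  rw [levyI2_neg] at hv_le
  linarith [mul_le_mul_of_nonneg_left hball hκ0]

end IsLevyKernel

/-! ### Perturbed maxima -/

/-- A `C²` cutoff at the origin, supported in the unit ball; `B` bounds its differential and its
quadratic Taylor remainder. -/
structure IsBump {E : Type*} [NormedAddCommGroup E] [NormedSpace ℝ E] (χ : E → ℝ) (B : ℝ) :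
    Prop where
  contDiff : ContDiff ℝ 2 χ
  nonneg : ∀ x, 0 ≤ χ x
  le_one : ∀ x, χ x ≤ 1
  map_zero : χ 0 = 1
  eq_zero : ∀ x, 1 < ‖x‖ → χ x = 0
  norm_fderiv_le : ∀ x, ‖fderiv ℝ χ x‖ ≤ B
  abs_taylor_le : ∀ x z, |χ (x + z) - χ x - fderiv ℝ χ x z| ≤ B * ‖z‖ ^ 2

section Bump

variable {E : Type*} [NormedAddCommGroup E] [NormedSpace ℝ E]

lemma norm_sub_sub_fderiv_le_of_lipschitzWith {F : Type*} [NormedAddCommGroup F] [NormedSpace ℝ F]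
    {f : E → F} (hf : Differentiable ℝ f) {K : NNReal} (hK : LipschitzWith K (fderiv ℝ f))
    (x z : E) : ‖f (x + z) - f x - fderiv ℝ f x z‖ ≤ K * ‖z‖ ^ 2 := by
  have hmvt := (convex_closedBall x ‖z‖).norm_image_sub_le_of_norm_hasFDerivWithin_le'
    (f := f) (f' := fderiv ℝ f) (φ := fderiv ℝ f x) (C := K * ‖z‖)
    (fun y _ => (hf y).hasFDerivAt.hasFDerivWithinAt)
    (fun y hy => (hK.norm_sub_le y x).trans (by
      gcongr
      rwa [← mem_closedBall_iff_norm]))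
    (mem_closedBall_self (norm_nonneg z)) (y := x + z) (by simp)
  rwa [add_sub_cancel_left, mul_assoc, ← sq] at hmvt

lemma exists_isBump (E : Type*) [NormedAddCommGroup E] [NormedSpace ℝ E] [FiniteDimensional ℝ E] :
    ∃ (χ : E → ℝ) (B : ℝ), IsBump χ B := by
  let f : ContDiffBump (0 : E) := ⟨1 / 2, 1, by norm_num, by norm_num⟩
  have hf : ContDiff ℝ 2 f := f.contDiff
  have hf' : ContDiff ℝ 1 (fderiv ℝ f) := hf.fderiv_right (by norm_num)
  have hsupp : HasCompactSupport (fderiv ℝ f) := f.hasCompactSupport.fderiv ℝ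
  obtain ⟨B₁, hB₁⟩ := hsupp.exists_bound_of_continuous hf'.continuous
  obtain ⟨B₂, hB₂⟩ := ContDiff.lipschitzWith_of_hasCompactSupport (𝕂 := ℝ) hsupp hf' one_ne_zero
  exact ⟨f, max B₁ B₂,
    { contDiff := hf
      nonneg := fun x => f.nonneg
      le_one := fun x => f.le_one
      map_zero := f.one_of_mem_closedBall (mem_closedBall_self f.rIn_pos.le)
      eq_zero := fun x hx => f.zero_of_le_dist (by simpa [f] using hx.le)
      norm_fderiv_le := fun x => (hB₁ x).trans (le_max_left _ _)
      abs_taylor_le := fun x z =>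
        (norm_sub_sub_fderiv_le_of_lipschitzWith (hf.differentiable two_ne_zero) hB₂ x z).trans
          (mul_le_mul_of_nonneg_right (le_max_right _ _) (sq_nonneg ‖z‖)) }⟩

namespace IsBump

variable {χ : E → ℝ} {B : ℝ}

lemma bound_nonneg (hχ : IsBump χ B) : 0 ≤ B := (norm_nonneg _).trans (hχ.norm_fderiv_le 0)

/-- The bump is centred at a near-maximum point, so it outweighs the values of `f` away from
its support. -/
lemma exists_isMaxOn_add (hχ : IsBump χ B) {X : Type*} [PseudoMetricSpace X] [ProperSpace X]
    {D : Set X} (hD : IsClosed D) (hDne : D.Nonempty) {f : X → ℝ} (hf : ContinuousOn f D)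
    (hbdd : BddAbove (f '' D)) {π : X → E} (hπ : Continuous π)
    (hcpt : ∀ e c, Bornology.IsBounded {x | x ∈ D ∧ c ≤ f x ∧ ‖π x - e‖ ≤ 1})
    {δ : ℝ} (hδ : 0 < δ) :
    ∃ e, ∃ x ∈ D, IsMaxOn (fun y => f y + δ * χ (π y - e)) D x ∧ ∀ y ∈ D, f y ≤ f x + δ := by
  obtain ⟨_, ⟨w, hw, rfl⟩, hlt⟩ := exists_lt_of_lt_csSup (hDne.image f)
    (show sSup (f '' D) - δ < sSup (f '' D) by linarith)
  have hnear : ∀ y ∈ D, f y ≤ f w + δ := fun y hy => by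
    linarith [le_csSup hbdd (mem_image_of_mem f hy)]
  have hχw : χ (π w - π w) = 1 := by rw [sub_self, hχ.map_zero]
  have hcont : ContinuousOn (fun y => f y + δ * χ (π y - π w)) D := by
    have := hχ.contDiff.continuous
    exact hf.add (Continuous.continuousOn (by fun_prop))
  have hcobdd : ∀ᶠ y in cocompact X ⊓ 𝓟 D,
      f y + δ * χ (π y - π w) ≤ f w + δ * χ (π w - π w) := by
    rw [← cobounded_eq_cocompact, eventually_inf_principal]
    filter_upwards [Bornology.isBounded_def.1 (hcpt (π w) (f w))] with y hy hyD
    rw [hχw]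
    rcases lt_or_ge (f y) (f w) with hlow | hhigh
    · exact add_le_add hlow.le (mul_le_mul_of_nonneg_left (hχ.le_one _) hδ.le)
    · have hfar : 1 < ‖π y - π w‖ := lt_of_not_ge fun hc => hy ⟨hyD, hhigh, hc⟩
      rw [hχ.eq_zero _ hfar]
      linarith [hnear y hyD]
  obtain ⟨x, hx, hmax⟩ := hcont.exists_isMaxOn' hD hw hcobdd
  refine ⟨π w, x, hx, hmax, fun y hy => (hnear y hy).trans ?_⟩
  have hwx : f w + δ * χ (π w - π w) ≤ f x + δ * χ (π x - π w) := hmax hw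
  rw [hχw] at hwx
  nlinarith [hχ.le_one (π x - π w)]

end IsBump

end Bump

/-! ### Viscosity solutions and test functions -/

/-- Viscosity subsolutions of `∂_t u = F(t, Y, ∂_{y_{N+1}} u, I_s[u(t, ·, y_{N+1})])` for `t > 0`,
`Y = (y, y_{N+1})`, tested at maxima that are global in space. The right-hand side may depend
on `u` itself. -/
def IsSubsolution (N : ℕ) (s : ℝ) (g : EN N → ℝ) (F : ℝ → EN N × ℝ → ℝ → ℝ → ℝ)
    (u : ℝ → EN N × ℝ → ℝ) : Prop :=
  ∀ (t₀ : ℝ) (Y₀ : EN N × ℝ) (φ : ℝ → EN N × ℝ → ℝ),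
    ContDiff ℝ 2 (fun q : ℝ × EN N × ℝ => φ q.1 q.2) →
    ∀ τ r : ℝ, 0 < τ → τ < t₀ → 0 < r →
    (∀ t ∈ Ioo (t₀ - τ) (t₀ + τ), ∀ Y, u t Y - φ t Y ≤ u t₀ Y₀ - φ t₀ Y₀) →
    deriv (fun t => φ t Y₀) t₀ ≤ F t₀ Y₀ (deriv (fun yn => φ t₀ (Y₀.1, yn)) Y₀.2)
      (levyI1 N s g (fun y => φ t₀ (y, Y₀.2)) r Y₀.1 +
        levyI2 N s g (fun y => u t₀ (y, Y₀.2)) r Y₀.1)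

/-- Viscosity supersolutions of `∂_t u = F(t, Y, ∂_{y_{N+1}} u, I_s[u(t, ·, y_{N+1})])`, encoded as
functions whose negative is a subsolution of the equation satisfied by `-u`. -/
def IsSupersolution (N : ℕ) (s : ℝ) (g : EN N → ℝ) (F : ℝ → EN N × ℝ → ℝ → ℝ → ℝ)
    (u : ℝ → EN N × ℝ → ℝ) : Prop :=
  IsSubsolution N s g (fun t Y d I => -F t Y (-d) (-I)) (fun t Y => -u t Y)

/-- The squared Euclidean distance between two points `(y, y_{N+1})`; the norm of `EN N × ℝ` is the
maximum norm, which is not smooth. -/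
noncomputable def sqDist {N : ℕ} (Y Z : EN N × ℝ) : ℝ := ‖Y.1 - Z.1‖ ^ 2 + (Y.2 - Z.2) ^ 2

/-- The family of test functions of the argument: a function of time, a quadratic penalisation of
the distance to `Z`, and a bump centred at `e` with time-dependent amplitude. -/
noncomputable def testFn {N : ℕ} (χ : EN N × ℝ → ℝ) (α ρ : ℝ → ℝ) (b : ℝ) (Z e : EN N × ℝ) (t : ℝ)
    (Y : EN N × ℝ) : ℝ :=
  α t + b * sqDist Y Z + ρ t * χ (Y - e)

section TestFn

variable {N : ℕ} {χ : EN N × ℝ → ℝ} {B : ℝ}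

lemma contDiff_testFn (hχ : ContDiff ℝ 2 χ) {α ρ : ℝ → ℝ} (hα : ContDiff ℝ 2 α)
    (hρ : ContDiff ℝ 2 ρ) (b : ℝ) (Z e : EN N × ℝ) :
    ContDiff ℝ 2 (fun q : ℝ × EN N × ℝ => testFn χ α ρ b Z e q.1 q.2) := by
  have hsq : ContDiff ℝ 2 (fun q : ℝ × EN N × ℝ => ‖q.2.1 - Z.1‖ ^ 2) :=
    ContDiff.norm_sq ℝ (by fun_prop)
  unfold testFn sqDist
  fun_prop

lemma deriv_testFn_time {α ρ : ℝ → ℝ} {α' ρ' t : ℝ} (hα : HasDerivAt α α' t)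
    (hρ : HasDerivAt ρ ρ' t) (b : ℝ) (Z e Y : EN N × ℝ) :
    deriv (fun t => testFn χ α ρ b Z e t Y) t = α' + ρ' * χ (Y - e) :=
  ((hα.add_const _).add (hρ.mul_const _)).deriv

lemma deriv_testFn_snd (hχ : ContDiff ℝ 2 χ) (α ρ : ℝ → ℝ) (b t : ℝ) (Z e Y : EN N × ℝ) :
    deriv (fun yn => testFn χ α ρ b Z e t (Y.1, yn)) Y.2 =
      2 * b * (Y.2 - Z.2) + ρ t * fderiv ℝ χ (Y - e) (0, 1) := by
  have hline : HasDerivAt (fun yn : ℝ => (Y.1, yn) - e) (0, 1) Y.2 :=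
    ((hasDerivAt_const Y.2 Y.1).prodMk (hasDerivAt_id Y.2)).sub_const e
  have hbump : HasDerivAt (fun yn : ℝ => χ ((Y.1, yn) - e)) (fderiv ℝ χ (Y - e) (0, 1)) Y.2 :=
    (hχ.differentiable two_ne_zero (Y - e)).hasFDerivAt.comp_hasDerivAt Y.2 hline
  have hsq : HasDerivAt (fun yn : ℝ => (yn - Z.2) ^ 2) (2 * (Y.2 - Z.2)) Y.2 := by
    refine (((hasDerivAt_id Y.2).sub_const Z.2).pow 2).congr_deriv ?_
    simp
  refine ((((hsq.const_add (‖Y.1 - Z.1‖ ^ 2)).const_mul b).const_add (α t)).add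
    (hbump.const_mul (ρ t))).deriv.trans ?_
  ring

lemma hasFDerivAt_testFn_fst (hχ : ContDiff ℝ 2 χ) (α ρ : ℝ → ℝ) (b t : ℝ) (Z e Y : EN N × ℝ) :
    HasFDerivAt (fun y => testFn χ α ρ b Z e t (y, Y.2))
      (b • 2 • innerSL ℝ (Y.1 - Z.1) +
        ρ t • (fderiv ℝ χ (Y - e)).comp (ContinuousLinearMap.inl ℝ (EN N) ℝ)) Y.1 := by
  have hslice :
      HasFDerivAt (fun y : EN N => (y, Y.2) - e) (ContinuousLinearMap.inl ℝ (EN N) ℝ) Y.1 :=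
    (hasFDerivAt_prodMk_left Y.1 Y.2).sub_const e
  have hbump := HasFDerivAt.comp Y.1 (g := χ)
    (hχ.differentiable two_ne_zero (Y - e)).hasFDerivAt hslice
  have hsq : HasFDerivAt (fun y : EN N => ‖y - Z.1‖ ^ 2) (2 • innerSL ℝ (Y.1 - Z.1)) Y.1 := by
    simpa using ((hasFDerivAt_id Y.1).sub_const Z.1).norm_sq
  exact (((hsq.add_const ((Y.2 - Z.2) ^ 2)).const_mul b).const_add (α t)).add
    (hbump.const_mul (ρ t))

lemma IsBump.abs_taylor_testFn_le (hχ : IsBump χ B) (α ρ : ℝ → ℝ) (b t : ℝ) (Z e Y : EN N × ℝ)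
    (ζ : EN N) :
    |testFn χ α ρ b Z e t (Y.1 + ζ, Y.2) - testFn χ α ρ b Z e t Y -
      fderiv ℝ (fun y => testFn χ α ρ b Z e t (y, Y.2)) Y.1 ζ| ≤
      (|b| + |ρ t| * B) * ‖ζ‖ ^ 2 := by
  have hsq : ‖Y.1 + ζ - Z.1‖ ^ 2 = ‖Y.1 - Z.1‖ ^ 2 + 2 * ⟪Y.1 - Z.1, ζ⟫ + ‖ζ‖ ^ 2 := by
    rw [add_sub_right_comm, norm_add_sq_real]
  have hshift : (Y.1 + ζ, Y.2) - e = Y - e + (ζ, 0) := by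
    ext1 <;> simp [add_sub_right_comm]
  have hbump := hχ.abs_taylor_le (Y - e) (ζ, 0)
  rw [Prod.norm_mk, norm_zero, max_eq_left (norm_nonneg ζ)] at hbump
  have hsplit : testFn χ α ρ b Z e t (Y.1 + ζ, Y.2) - testFn χ α ρ b Z e t Y -
      fderiv ℝ (fun y => testFn χ α ρ b Z e t (y, Y.2)) Y.1 ζ =
      b * ‖ζ‖ ^ 2 + ρ t * (χ (Y - e + (ζ, 0)) - χ (Y - e) - fderiv ℝ χ (Y - e) (ζ, 0)) := by
    rw [(hasFDerivAt_testFn_fst hχ.contDiff α ρ b t Z e Y).fderiv, testFn, testFn, sqDist, sqDist,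
      hshift, hsq]
    simp only [add_apply, smul_apply, innerSL_apply_apply, ContinuousLinearMap.comp_apply,
      ContinuousLinearMap.inl_apply, smul_eq_mul, nsmul_eq_mul, Nat.cast_ofNat]
    ring
  rw [hsplit, add_mul, mul_assoc]
  refine (abs_add_le _ _).trans ?_
  rw [abs_mul, abs_mul, abs_of_nonneg (sq_nonneg ‖ζ‖)]
  gcongr

lemma exists_Ioo_subset_Icc {t T : ℝ} (ht : t ∈ Ioo 0 T) :
    ∃ τ ∈ Ioo 0 t, Ioo (t - τ) (t + τ) ⊆ Icc 0 T := by
  refine ⟨min t (T - t) / 2, ⟨half_pos (lt_min ht.1 (sub_pos.2 ht.2)), ?_⟩,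
    fun t' ht' => ⟨?_, ?_⟩⟩
  · linarith [min_le_left t (T - t), ht.1]
  · linarith [min_le_left t (T - t), ht'.1, ht.1]
  · linarith [min_le_right t (T - t), ht'.2, ht.2]

lemma IsSubsolution.apply_testFn {s : ℝ} {g : EN N → ℝ} {F : ℝ → EN N × ℝ → ℝ → ℝ → ℝ}
    {u : ℝ → EN N × ℝ → ℝ} (hu : IsSubsolution N s g F u) (hk : IsLevyKernel N s g)
    (hχ : IsBump χ B) {α ρ : ℝ → ℝ} (hα : ContDiff ℝ 2 α) (hρ : ContDiff ℝ 2 ρ) {α' ρ' t : ℝ}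
    (hα' : HasDerivAt α α' t) (hρ' : HasDerivAt ρ ρ' t) (b : ℝ) (Z e Y : EN N × ℝ) {r : ℝ}
    (hr : 0 < r) (hr1 : r ≤ 1) {T : ℝ} (ht : t ∈ Ioo 0 T)
    (hmax : ∀ t' ∈ Icc 0 T, ∀ Y',
      u t' Y' - testFn χ α ρ b Z e t' Y' ≤ u t Y - testFn χ α ρ b Z e t Y) :
    ∃ ω I : ℝ, |ω| ≤ B ∧
      I ≤ (|b| + |ρ t| * B) * nearMass N s g r + levyI2 N s g (fun y => u t (y, Y.2)) r Y.1 ∧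
      α' + ρ' * χ (Y - e) ≤ F t Y (2 * b * (Y.2 - Z.2) + ρ t * ω) I := by
  refine ⟨fderiv ℝ χ (Y - e) (0, 1),
    levyI1 N s g (fun y => testFn χ α ρ b Z e t (y, Y.2)) r Y.1 +
      levyI2 N s g (fun y => u t (y, Y.2)) r Y.1, ?_, ?_,
    (deriv_testFn_time hα' hρ' b Z e Y).ge.trans ?_⟩
  · refine ((fderiv ℝ χ (Y - e)).le_opNorm (0, 1)).trans ?_
    simpa using hχ.norm_fderiv_le (Y - e)
  · exact add_le_add_left (le_of_abs_le (hk.abs_levyI1_le hr1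
      (hχ.abs_taylor_testFn_le α ρ b t Z e Y))) _
  · rw [← deriv_testFn_snd hχ.contDiff α ρ b t Z e Y]
    obtain ⟨τ, ⟨hτ, hτt⟩, hτT⟩ := exists_Ioo_subset_Icc ht
    exact hu t Y _ (contDiff_testFn hχ.contDiff hα hρ b Z e) τ r hτ hτt hr
      fun t' ht' Y' => hmax t' (hτT ht') Y'

end TestFn

section Translation

variable {N : ℕ} {s : ℝ} {g : EN N → ℝ} {F : ℝ → EN N × ℝ → ℝ → ℝ → ℝ} {u : ℝ → EN N × ℝ → ℝ}

lemma IsSubsolution.mono {F' : ℝ → EN N × ℝ → ℝ → ℝ → ℝ} (hu : IsSubsolution N s g F u)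
    (hF : ∀ t > 0, ∀ Y d I, F t Y d I ≤ F' t Y d I) : IsSubsolution N s g F' u :=
  fun t₀ Y₀ φ hφ τ r hτ hτt hr hmax =>
    (hu t₀ Y₀ φ hφ τ r hτ hτt hr hmax).trans (hF t₀ (hτ.trans hτt) _ _ _)

lemma IsSubsolution.translate (hu : IsSubsolution N s g F u) {k : ℝ} (hk : 0 ≤ k)
    (m : EN N × ℝ) (c : ℝ) :
    IsSubsolution N s g (fun t Y => F (t + k) (Y + m)) (fun t Y => u (t + k) (Y + m) + c) := by
  intro t₀ Y₀ φ hφ τ r hτ hτt hr hmax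
  have hφ' : ContDiff ℝ 2 (fun q : ℝ × EN N × ℝ => φ (q.1 - k) (q.2 - m)) :=
    hφ.comp (f := fun q : ℝ × EN N × ℝ => (q.1 - k, q.2 - m)) (by fun_prop)
  have key := hu (t₀ + k) (Y₀ + m) (fun t Y => φ (t - k) (Y - m)) hφ' τ r hτ (by linarith) hr
    fun t ht Y => by
      have hmax' := hmax (t - k) ⟨by linarith [ht.1], by linarith [ht.2]⟩ (Y - m)
      simp only [sub_add_cancel] at hmax'
      simp only [add_sub_cancel_right]
      linarith
  have hpair : ∀ (y : EN N) (yn : ℝ), (y, yn) - m = (y - m.1, yn - m.2) := fun _ _ => rfl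
  have hI1 : levyI1 N s g (fun y => φ t₀ ((y, (Y₀ + m).2) - m)) r (Y₀ + m).1 =
      levyI1 N s g (fun y => φ t₀ (y, Y₀.2)) r Y₀.1 := by
    simp only [levyI1, hpair, Prod.fst_add, Prod.snd_add, add_sub_cancel_right,
      add_right_comm Y₀.1, fderiv_comp_sub (f := fun y => φ t₀ (y, Y₀.2))]
  have hI2 : levyI2 N s g (fun y => u (t₀ + k) (y, (Y₀ + m).2)) r (Y₀ + m).1 =
      levyI2 N s g (fun y => u (t₀ + k) ((y, Y₀.2) + m) + c) r Y₀.1 :=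
    (levyI2_comp_add_right_add_const (fun y => u (t₀ + k) (y, (Y₀ + m).2)) m.1 c r Y₀.1).symm
  have hd : deriv (fun yn => φ t₀ (((Y₀ + m).1, yn) - m)) (Y₀ + m).2 =
      deriv (fun yn => φ t₀ (Y₀.1, yn)) Y₀.2 := by
    simp only [hpair, Prod.fst_add, Prod.snd_add, add_sub_cancel_right,
      deriv_comp_sub_const (f := fun yn => φ t₀ (Y₀.1, yn))]
  simpa only [add_sub_cancel_right, deriv_comp_sub_const (f := fun t => φ t Y₀), hI1, hI2, hd]
    using key

end Translation

/-! ### The cell problem -/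

/-- The right-hand side of the cell problem solved by `U`, as a function of `t`,
`Y = (y, y_{N+1})`, `d = ∂_{y_{N+1}} U` and `I = I_s[U]`. -/
noncomputable def cellRHS (N : ℕ) (W : ℝ → ℝ) (σ : ℝ → EN N → ℝ) (p : EN N) (L a₀ η : ℝ)
    (U : ℝ → EN N × ℝ → ℝ) (t : ℝ) (Y : EN N × ℝ) (d I : ℝ) : ℝ :=
  L + I - deriv W (U t Y + ⟪p, Y.1⟫ + Y.2) + σ t Y.1
    + η * (a₀ + (⨅ Y', U t Y') - U t Y) * |d + 1|

/-- Continuous viscosity solutions of the cell problem that are bounded on finite time intervals,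
with arbitrary initial values. -/
structure IsCellSolution (N : ℕ) (s : ℝ) (g : EN N → ℝ) (W : ℝ → ℝ) (σ : ℝ → EN N → ℝ) (p : EN N)
    (L a₀ η : ℝ) (U : ℝ → EN N × ℝ → ℝ) : Prop where
  continuousOn : ContinuousOn (fun q : ℝ × EN N × ℝ => U q.1 q.2) (Ici 0 ×ˢ univ)
  bounded : ∀ T, ∃ M, ∀ t ∈ Icc 0 T, ∀ Y, |U t Y| ≤ M
  subsolution : IsSubsolution N s g (cellRHS N W σ p L a₀ η U) U
  supersolution : IsSupersolution N s g (cellRHS N W σ p L a₀ η U) U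

lemma IsSolNp1.isCellSolution {N : ℕ} {s : ℝ} {g : EN N → ℝ} {W : ℝ → ℝ} {σ : ℝ → EN N → ℝ}
    {p : EN N} {L a₀ η : ℝ} {U : ℝ → EN N → ℝ → ℝ}
    (hU : IsSolNp1 N s g
      (fun τ y yn v _ dyn I infv =>
        L + I - deriv W (v + ⟪p, y⟫ + yn) + σ τ y + η * (a₀ + infv - v) * |dyn + 1|)
      (fun _ _ => 0) U) :
    IsCellSolution N s g W σ p L a₀ η (fun t Y => U t Y.1 Y.2) ∧ ∀ y yn, U 0 y yn = 0 := by
  obtain ⟨hcont, ⟨-, hbdd, hle, hsub⟩, ⟨-, -, hge, hsup⟩⟩ := hU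
  have hU0 : ∀ y yn, U 0 y yn = 0 := fun y yn => le_antisymm (hle y yn) (hge y yn)
  refine ⟨⟨hcont, fun T => ?_, fun t₀ Y₀ φ hφ τ r hτ hτt hr hmax => ?_,
    fun t₀ Y₀ φ hφ τ r hτ hτt hr hmax => ?_⟩, hU0⟩
  · obtain ⟨M, hM⟩ := hbdd (max T 1) (by positivity)
    refine ⟨max M 0, fun t ht Y => ?_⟩
    rcases ht.1.eq_or_lt with rfl | hpos
    · rw [hU0, abs_zero]
      exact le_max_right _ _
    · exact (hM t ⟨hpos, ht.2.trans (le_max_left _ _)⟩ Y.1 Y.2).trans (le_max_left _ _)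
  · exact sub_nonpos.1 (hsub t₀ Y₀.1 Y₀.2 (hτ.trans hτt) (fun t y yn => φ t (y, yn)) hφ τ r hτ hτt
      hr fun t y yn ht _ _ => hmax t ht (y, yn))
  · have hmin := sub_nonneg.1 (hsup t₀ Y₀.1 Y₀.2 (hτ.trans hτt) (fun t y yn => -φ t (y, yn)) hφ.neg
      τ r hτ hτt hr fun t y yn ht _ _ => by linarith [hmax t ht (y, yn)])
    simp only [deriv.fun_neg, levyI1_neg] at hmin
    simp only [cellRHS, levyI2_neg, neg_add, neg_neg]
    linarith

namespace IsCellSolution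

variable {N : ℕ} {s : ℝ} {g : EN N → ℝ} {W : ℝ → ℝ} {σ : ℝ → EN N → ℝ} {p : EN N}
  {L a₀ η : ℝ} {U : ℝ → EN N × ℝ → ℝ}

lemma continuous_slice (hU : IsCellSolution N s g W σ p L a₀ η U) {t : ℝ} (ht : 0 ≤ t) :
    Continuous (U t) := by
  rw [← continuousOn_univ]
  exact hU.continuousOn.comp (f := fun Y : EN N × ℝ => (t, Y)) (by fun_prop)
    fun _ _ => ⟨ht, trivial⟩

lemma bounded_slice (hU : IsCellSolution N s g W σ p L a₀ η U) {t : ℝ} (ht : 0 ≤ t) :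
    ∃ M, ∀ Y, |U t Y| ≤ M :=
  (hU.bounded t).imp fun _ hM => hM t ⟨ht, le_rfl⟩

lemma bddBelow_range (hU : IsCellSolution N s g W σ p L a₀ η U) {t : ℝ} (ht : 0 ≤ t) :
    BddBelow (range (U t)) := by
  obtain ⟨M, hM⟩ := hU.bounded_slice ht
  exact ⟨-M, forall_mem_range.2 fun Y => neg_le_of_abs_le (hM Y)⟩

lemma iInf_le (hU : IsCellSolution N s g W σ p L a₀ η U) {t : ℝ} (ht : 0 ≤ t) (Y : EN N × ℝ) :
    ⨅ Y', U t Y' ≤ U t Y :=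
  ciInf_le (hU.bddBelow_range ht) Y

lemma cellRHS_translate (hU : IsCellSolution N s g W σ p L a₀ η U) {k : ℝ} (hk : 0 ≤ k)
    {m : EN N × ℝ} {c : ℝ} (hσ : ∀ t y, σ (t + k) (y + m.1) = σ t y)
    (hW : (deriv W).Periodic (⟪p, m.1⟫ + m.2 - c)) {t : ℝ} (ht : 0 < t) (Y : EN N × ℝ) (d I : ℝ) :
    cellRHS N W σ p L a₀ η U (t + k) (Y + m) d I =
      cellRHS N W σ p L a₀ η (fun t Y => U (t + k) (Y + m) + c) t Y d I := by
  have hinf : ⨅ Y', (U (t + k) (Y' + m) + c) = (⨅ Y', U (t + k) Y') + c := by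
    rw [(add_right_surjective m).iInf_comp (g := fun Y => U (t + k) Y + c),
      ciInf_add (hU.bddBelow_range (by positivity))]
  have harg : U (t + k) (Y + m) + ⟪p, (Y + m).1⟫ + (Y + m).2 =
      U (t + k) (Y + m) + c + ⟪p, Y.1⟫ + Y.2 + (⟪p, m.1⟫ + m.2 - c) := by
    rw [Prod.fst_add, Prod.snd_add, inner_add_right]
    ring
  rw [cellRHS, cellRHS, hinf, harg, hW, Prod.fst_add, hσ]
  ring

lemma translate (hU : IsCellSolution N s g W σ p L a₀ η U) {k : ℝ} (hk : 0 ≤ k)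
    {m : EN N × ℝ} {c : ℝ} (hσ : ∀ t y, σ (t + k) (y + m.1) = σ t y)
    (hW : (deriv W).Periodic (⟪p, m.1⟫ + m.2 - c)) :
    IsCellSolution N s g W σ p L a₀ η (fun t Y => U (t + k) (Y + m) + c) where
  continuousOn := (hU.continuousOn.comp (f := fun q : ℝ × EN N × ℝ => (q.1 + k, q.2 + m))
    (by fun_prop) fun _ hq => ⟨add_nonneg hq.1 hk, trivial⟩).add continuousOn_const
  bounded T := by
    obtain ⟨M, hM⟩ := hU.bounded (T + k)
    refine ⟨M + |c|, fun t ht Y => (abs_add_le _ _).trans ?_⟩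
    gcongr
    exact hM _ ⟨add_nonneg ht.1 hk, by linarith [ht.2]⟩ _
  subsolution := (hU.subsolution.translate hk m c).mono fun _ ht Y d I =>
    (hU.cellRHS_translate hk hσ hW ht Y d I).le
  supersolution := by
    have h := (IsSubsolution.translate hU.supersolution hk m (-c)).mono fun _ ht Y d I =>
      (neg_inj.2 (hU.cellRHS_translate hk hσ hW ht Y (-d) (-I))).le
    simpa only [IsSupersolution, neg_add] using h

end IsCellSolution

/-! ### The data of the cell problem -/

/-- The point of the integer lattice of `ℝ^N` with coordinates `k`. -/
noncomputable def latticePoint {N : ℕ} (k : Fin N → ℤ) : EN N :=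
  (WithLp.equiv 2 (Fin N → ℝ)).symm fun j => (k j : ℝ)

/-- Quantitative form of the standing hypotheses on the data: `A` bounds `|W'|`, `S` bounds `|σ|`,
and `K ≥ 1` is a Lipschitz constant of both `W'` and `σ`. -/
structure IsCellData (N : ℕ) (s : ℝ) (g : EN N → ℝ) (W : ℝ → ℝ) (σ : ℝ → EN N → ℝ) (A S K : ℝ) :
    Prop where
  kernel : IsLevyKernel N s g
  abs_deriv_le : ∀ v, |deriv W v| ≤ A
  abs_forcing_le : ∀ t y, 0 ≤ t → |σ t y| ≤ S
  one_le : 1 ≤ K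
  lipschitz_deriv : ∀ v w, |deriv W v - deriv W w| ≤ K * |v - w|
  lipschitz_forcing : ∀ t t' y y', |σ t y - σ t' y'| ≤ K * (|t - t'| + ‖y - y'‖)
  periodic_deriv : (deriv W).Periodic 1
  periodic_forcing : ∀ (k : ℕ) (m : Fin N → ℤ) t y, σ (t + k) (y + latticePoint m) = σ t y

lemma IsCellData.bound_nonneg {N : ℕ} {s : ℝ} {g : EN N → ℝ} {W : ℝ → ℝ} {σ : ℝ → EN N → ℝ}
    {A S K : ℝ} (hD : IsCellData N s g W σ A S K) : 0 ≤ A + S :=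
  add_nonneg ((abs_nonneg _).trans (hD.abs_deriv_le 0))
    ((abs_nonneg _).trans (hD.abs_forcing_le 0 0 le_rfl))

lemma exists_norm_add_latticePoint_sub_le {N : ℕ} (y y' : EN N) :
    ∃ m, ‖y + latticePoint m - y'‖ ≤ √N := by
  refine ⟨fun j => -⌊(y - y') j⌋, ?_⟩
  rw [EuclideanSpace.norm_eq]
  refine Real.sqrt_le_sqrt
    ((Finset.sum_le_sum (g := fun _ => (1 : ℝ)) fun j _ => ?_).trans (by simp))
  have hfract : (y + latticePoint (fun j => -⌊(y - y') j⌋) - y') j = Int.fract ((y - y') j) := by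
    rw [← Int.self_sub_floor]
    simp only [latticePoint, PiLp.sub_apply, PiLp.add_apply, WithLp.equiv_symm_apply, Int.cast_neg]
    ring
  rw [hfract, Real.norm_of_nonneg (Int.fract_nonneg _)]
  exact pow_le_one₀ (Int.fract_nonneg _) (Int.fract_lt_one _).le

section Periodicity

variable {N : ℕ} {W : ℝ → ℝ} {σ : ℝ → EN N → ℝ}

lemma H2.periodic_deriv (hW : H2 W) : (deriv W).Periodic 1 := fun v => by
  rw [← deriv_comp_add_const, funext hW.2.2]

lemma H2.abs_deriv_le_supW' (hW : H2 W) (v : ℝ) : |deriv W v| ≤ supW' W := by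
  obtain ⟨K, hK⟩ := hW.2.1
  obtain ⟨M, hM⟩ := isCompact_Icc.exists_bound_of_continuousOn (s := Icc (0 : ℝ) 1)
    hK.continuous.continuousOn
  refine le_ciSup (f := fun v => |deriv W v|) ⟨M, forall_mem_range.2 fun v => ?_⟩ v
  have hper : deriv W (Int.fract v) = deriv W v := by
    simpa using (hW.periodic_deriv.sub_zsmul_eq (x := v) ⌊v⌋)
  rw [← hper]
  exact hM _ ⟨Int.fract_nonneg v, (Int.fract_lt_one v).le⟩

lemma H3.add_natCast (hσ : H3 N σ) (k : ℕ) (t : ℝ) (y : EN N) : σ (t + k) y = σ t y := by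
  have hper : (fun t => σ t y).Periodic 1 := fun t => hσ.2.1 t y
  simpa using hper.nat_mul k t

lemma H3.abs_le_supSigma (hσ : H3 N σ) {t : ℝ} (ht : 0 ≤ t) (y : EN N) :
    |σ t y| ≤ supSigma N σ := by
  obtain ⟨K, hK⟩ := hσ.1
  have hcell : IsCompact (Icc (0 : ℝ) 1 ×ˢ closedBall (0 : EN N) √N) :=
    isCompact_Icc.prod (isCompact_closedBall _ _)
  obtain ⟨M, hM⟩ := hcell.exists_bound_of_continuousOn hK.continuous.continuousOn
  refine le_csSup ⟨M, ?_⟩ ⟨t, y, ht, rfl⟩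
  rintro _ ⟨t, y, ht, rfl⟩
  obtain ⟨m, hm⟩ := exists_norm_add_latticePoint_sub_le y 0
  have hper : σ (t - ⌊t⌋₊) (y + latticePoint m) = σ t y := by
    rw [← hσ.add_natCast ⌊t⌋₊ (t - ⌊t⌋₊), sub_add_cancel]
    exact hσ.2.2 m t y
  rw [← hper]
  refine hM (t - ⌊t⌋₊, y + latticePoint m) ⟨⟨?_, ?_⟩, by simpa using hm⟩
  · exact sub_nonneg.2 (Nat.floor_le ht)
  · exact (sub_lt_iff_lt_add'.2 (Nat.lt_floor_add_one t)).le

lemma exists_isCellData {s : ℝ} {g : EN N → ℝ} (hk : IsLevyKernel N s g) (hW : H2 W)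
    (hσ : H3 N σ) : ∃ K, IsCellData N s g W σ (supW' W) (supSigma N σ) K := by
  obtain ⟨KW, hKW⟩ := hW.2.1
  obtain ⟨Kσ, hKσ⟩ := hσ.1
  refine ⟨KW + Kσ + 1, hk, hW.abs_deriv_le_supW', fun t y ht => hσ.abs_le_supSigma ht y,
    by linarith [KW.2, Kσ.2], fun v w => ?_, fun t t' y y' => ?_, hW.periodic_deriv,
    fun k m t y => (hσ.2.2 m _ y).trans (hσ.add_natCast k t y)⟩
  · refine (hKW.dist_le_mul v w).trans (mul_le_mul_of_nonneg_right ?_ dist_nonneg)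
    linarith [Kσ.2]
  · refine (hKσ.dist_le_mul (t, y) (t', y')).trans (mul_le_mul (by linarith [KW.2]) ?_ dist_nonneg
      (by positivity))
    rw [Prod.dist_eq, ← dist_eq_norm, ← Real.dist_eq]
    exact max_le_add_of_nonneg dist_nonneg dist_nonneg

end Periodicity

/-! ### Linear barriers -/

section Barrier

lemma IsBump.exists_interior_isMaxOn {E : Type*} [NormedAddCommGroup E] [NormedSpace ℝ E]
    [FiniteDimensional ℝ E] {χ : E → ℝ} {B : ℝ} (hχ : IsBump χ B) {V : ℝ → E → ℝ} {w : ℝ → ℝ}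
    {C T t₁ δ : ℝ} {Y₁ : E} (hV : ContinuousOn (fun q : ℝ × E => V q.1 q.2) (Icc 0 T ×ˢ univ))
    (hw : Continuous w) (hC : ∀ t ∈ Icc 0 T, ∀ Y, V t Y ≤ C) (h0 : ∀ Y, V 0 Y ≤ w 0)
    (hT : ∀ Y, V T Y ≤ w T) (ht₁ : t₁ ∈ Icc 0 T) (hδ : 0 < δ) (hlt : w t₁ + δ < V t₁ Y₁) :
    ∃ e, ∃ t ∈ Ioo 0 T, ∃ Y,
      IsMaxOn (fun q : ℝ × E => V q.1 q.2 - w q.1 + δ * χ (q.2 - e)) (Icc 0 T ×ˢ univ) (t, Y) ∧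
      ∀ t' ∈ Icc 0 T, ∀ Y', V t' Y' - w t' ≤ V t Y - w t + δ := by
  have := FiniteDimensional.proper ℝ E
  obtain ⟨m, hm⟩ := isCompact_Icc.bddBelow_image (hw.continuousOn (s := Icc (0 : ℝ) T))
  have hcpt : ∀ e c, Bornology.IsBounded {q : ℝ × E | q ∈ Icc 0 T ×ˢ univ ∧
      c ≤ V q.1 q.2 - w q.1 ∧ ‖q.2 - e‖ ≤ 1} := fun e _ =>
    ((isBounded_Icc (0 : ℝ) T).prod (isBounded_closedBall (x := e) (r := 1))).subset fun q hq =>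
      ⟨hq.1.1, mem_closedBall_iff_norm.2 hq.2.2⟩
  obtain ⟨e, ⟨t, Y⟩, ⟨ht, -⟩, hmax, hnear⟩ := hχ.exists_isMaxOn_add
    (D := Icc 0 T ×ˢ univ) (f := fun q : ℝ × E => V q.1 q.2 - w q.1)
    (isClosed_Icc.prod isClosed_univ) ⟨(t₁, Y₁), ht₁, trivial⟩ (hV.sub (by fun_prop))
    ⟨C - m, forall_mem_image.2 fun (q : ℝ × E) hq =>
      sub_le_sub (hC _ hq.1 _) (hm (mem_image_of_mem w hq.1))⟩ continuous_snd hcpt hδ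
  have hpos : 0 < V t Y - w t := by linarith [hnear (t₁, Y₁) ⟨ht₁, trivial⟩]
  refine ⟨e, t, ⟨ht.1.lt_of_ne ?_, ht.2.lt_of_ne ?_⟩, Y, hmax,
    fun t' ht' Y' => hnear (t', Y') ⟨ht', trivial⟩⟩
  · rintro rfl
    linarith [h0 Y]
  · rintro rfl
    linarith [hT Y]

variable {N : ℕ} {s : ℝ} {g : EN N → ℝ} {F : ℝ → EN N × ℝ → ℝ → ℝ → ℝ} {V : ℝ → EN N × ℝ → ℝ}

lemma IsSubsolution.deriv_le_of_isMaxOn_add (hV : IsSubsolution N s g F V)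
    (hk : IsLevyKernel N s g) {χ : EN N × ℝ → ℝ} {B : ℝ} (hχ : IsBump χ B) {w : ℝ → ℝ}
    (hw : ContDiff ℝ 2 w) {T t w' c κ δ : ℝ} {e Y : EN N × ℝ} (ht : t ∈ Ioo 0 T)
    (hw' : HasDerivAt w w' t) (hcont : Continuous (V t)) (hbdd : ∃ C, ∀ Y', |V t Y'| ≤ C)
    (hκ : 0 ≤ κ) (hF : ∀ d I q, (∀ Y', V t Y' ≤ V t Y + q) →
      F t Y d I ≤ c + I + κ * (|d| + q * (1 + |d|)))
    (hδ : 0 < δ) (hδ1 : δ ≤ 1)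
    (hmax : IsMaxOn (fun q : ℝ × EN N × ℝ => V q.1 q.2 - w q.1 + δ * χ (q.2 - e))
      (Icc 0 T ×ˢ univ) (t, Y))
    (hnear : ∀ Y', V t Y' ≤ V t Y + δ) :
    w' ≤ c + (B * nearMass N s g 1 + farMass N s g 1 + κ * (2 * B + 1)) * δ := by
  obtain ⟨C, hC⟩ := hbdd
  obtain ⟨ω, I, hω, hI, hineq⟩ := hV.apply_testFn hk hχ hw (ρ := fun _ => -δ) contDiff_const hw'
    (hasDerivAt_const t _) 0 0 e Y one_pos le_rfl ht fun t' ht' Y' => by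
      have : V t' Y' - w t' + δ * χ (Y' - e) ≤ V t Y - w t + δ * χ (Y - e) :=
        hmax (show (t', Y') ∈ Icc 0 T ×ˢ univ from ⟨ht', trivial⟩)
      simp only [testFn]
      linarith
  have hfar : levyI2 N s g (fun y => V t (y, Y.2)) 1 Y.1 ≤ δ * farMass N s g 1 := by
    have h := hk.levyI2_le_add_farMass one_pos (u := fun y => V t (y, Y.2)) (v := fun _ => (0 : ℝ))
      (x := Y.1) (x' := 0) (c := δ) (by fun_prop) continuous_const (fun y => hC _)
      (fun _ => abs_zero.le) fun z => by linarith [hnear (Y.1 + z, Y.2)]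
    rwa [levyI2_const, zero_add] at h
  have hd : |2 * 0 * (Y.2 - (0 : EN N × ℝ).2) + -δ * ω| ≤ δ * B := by
    rw [mul_zero, zero_mul, zero_add, abs_mul, abs_neg, abs_of_pos hδ]
    gcongr
  have hham := mul_le_mul_of_nonneg_left (add_le_add hd (mul_le_mul_of_nonneg_left
    (add_le_add_right (hd.trans (mul_le_of_le_one_left hχ.bound_nonneg hδ1)) 1) hδ.le)) hκ
  rw [abs_zero, zero_add, abs_neg, abs_of_pos hδ] at hI
  rw [zero_mul, add_zero] at hineq
  linarith [hF (2 * 0 * (Y.2 - (0 : EN N × ℝ).2) + -δ * ω) I δ hnear]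

lemma IsSubsolution.le_of_strict_barrier (hV : IsSubsolution N s g F V)
    (hk : IsLevyKernel N s g)
    (hcont : ContinuousOn (fun q : ℝ × EN N × ℝ => V q.1 q.2) (Ici 0 ×ˢ univ)) {T C : ℝ}
    (hC : ∀ t ∈ Icc 0 T, ∀ Y, |V t Y| ≤ C) {c κ θ : ℝ} (hκ : 0 ≤ κ) (hθ : 0 < θ)
    (hF : ∀ t > 0, ∀ Y d I q, (∀ Y', V t Y' ≤ V t Y + q) →
      F t Y d I ≤ c + I + κ * (|d| + q * (1 + |d|)))
    {w : ℝ → ℝ} (hw : ContDiff ℝ 2 w) (hw' : ∀ t ∈ Ioo 0 T, c + θ ≤ deriv w t)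
    (h0 : ∀ Y, V 0 Y ≤ w 0) (hT : ∀ Y, V T Y ≤ w T) {t₁ : ℝ} (ht₁ : t₁ ∈ Icc 0 T)
    (Y₁ : EN N × ℝ) : V t₁ Y₁ ≤ w t₁ := by
  by_contra! hlt
  obtain ⟨χ, B, hχ⟩ := exists_isBump (EN N × ℝ)
  set X := B * nearMass N s g 1 + farMass N s g 1 + κ * (2 * B + 1)
  have hX0 : 0 ≤ X := by
    have := hk.nearMass_nonneg 1; have := hk.farMass_nonneg 1; have := hχ.bound_nonneg
    positivity
  obtain ⟨δ, hδ, hδlt⟩ := exists_pos_mul_lt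
    (lt_min (lt_min (sub_pos.2 hlt) one_pos) hθ) (X + 1)
  have hXδ := mul_nonneg hX0 hδ.le
  obtain ⟨⟨hδgap, hδ1⟩, hδθ⟩ := (lt_min_iff.1 hδlt).imp_left lt_min_iff.1
  obtain ⟨e, t, ht, Y, hmax, hnear⟩ := hχ.exists_interior_isMaxOn
    (hcont.mono (prod_mono_left Icc_subset_Ici_self)) hw.continuous
    (fun t ht Y => le_of_abs_le (hC t ht Y)) h0 hT ht₁ hδ (by linarith : w t₁ + δ < V t₁ Y₁)
  have htI : t ∈ Icc 0 T := Ioo_subset_Icc_self ht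
  have hrate := hV.deriv_le_of_isMaxOn_add hk hχ hw ht
    (hw.differentiable two_ne_zero t).hasDerivAt
    (continuousOn_univ.1 (hcont.uncurry_left t ht.1.le)) ⟨C, hC t htI⟩ hκ (hF t ht.1 Y) hδ
    (by linarith) hmax fun Y' => by linarith [hnear t htI Y']
  linarith [hw' t ht]

/-- The exponential in the barrier `M + c * t + ε * exp (a * (t - t₁))` exceeds the bound on `V`
at time `t₁ + 1`, at the cost of an error `ε` at time `t₁`. -/
theorem IsSubsolution.le_linear (hV : IsSubsolution N s g F V) (hk : IsLevyKernel N s g)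
    (hcont : ContinuousOn (fun q : ℝ × EN N × ℝ => V q.1 q.2) (Ici 0 ×ˢ univ))
    (hbdd : ∀ T, ∃ C, ∀ t ∈ Icc 0 T, ∀ Y, |V t Y| ≤ C) {M c κ : ℝ} (hκ : 0 ≤ κ)
    (hF : ∀ t > 0, ∀ Y d I q, (∀ Y', V t Y' ≤ V t Y + q) →
      F t Y d I ≤ c + I + κ * (|d| + q * (1 + |d|)))
    (h0 : ∀ Y, V 0 Y ≤ M) {t₁ : ℝ} (ht₁ : 0 ≤ t₁) (Y₁ : EN N × ℝ) : V t₁ Y₁ ≤ M + c * t₁ := by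
  obtain ⟨C, hC⟩ := hbdd (t₁ + 1)
  refine le_of_forall_pos_le_add fun ε hε => ?_
  obtain ⟨a, hexp, ha⟩ := (((Real.tendsto_exp_atTop.const_mul_atTop hε).eventually_ge_atTop
    (C - (M + c * (t₁ + 1)))).and (eventually_gt_atTop 0)).exists
  have hderiv : ∀ t, HasDerivAt (fun t => M + c * t + ε * Real.exp (a * (t - t₁)))
      (c + ε * (Real.exp (a * (t - t₁)) * a)) t := fun t => by
    have hlin : HasDerivAt (fun t => M + c * t) c t := by
      simpa using ((hasDerivAt_id t).const_mul c).const_add M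
    have hpow : HasDerivAt (fun t => a * (t - t₁)) a t := by
      simpa using ((hasDerivAt_id t).sub_const t₁).const_mul a
    exact hlin.add (hpow.exp.const_mul ε)
  have hle := hV.le_of_strict_barrier hk hcont hC hκ
    (show 0 < ε * (Real.exp (-(a * t₁)) * a) by positivity) hF
    (w := fun t => M + c * t + ε * Real.exp (a * (t - t₁))) (by fun_prop)
    (fun t ht => ?_) (fun Y => (h0 Y).trans ?_)
    (fun Y => (le_of_abs_le (hC _ ⟨by linarith, le_rfl⟩ Y)).trans ?_) ⟨ht₁, by linarith⟩ Y₁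
  · simpa using hle
  · rw [(hderiv t).deriv]
    gcongr
    nlinarith [ht.1]
  · simp only [mul_zero, add_zero, le_add_iff_nonneg_right]
    positivity
  · simp only [add_sub_cancel_left, mul_one]
    linarith

end Barrier

lemma abs_add_mul_abs_add_one_sub_le {a i d q : ℝ} (hi : |i| ≤ q) :
    |(a + i) * |d + 1| - a| ≤ (1 + |a|) * (|d| + q * (1 + |d|)) := by
  have hq : 0 ≤ q := (abs_nonneg i).trans hi
  have hd : abs (|d + 1| - 1) ≤ |d| := by simpa using abs_abs_sub_abs_le_abs_sub (d + 1) 1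
  have hd' : |d + 1| ≤ 1 + |d| := by linarith [le_of_abs_le hd]
  calc |(a + i) * |d + 1| - a| = abs (a * (|d + 1| - 1) + i * |d + 1|) := by ring_nf
    _ ≤ |a| * abs (|d + 1| - 1) + |i| * |d + 1| := by
      simpa only [abs_mul, abs_abs] using abs_add_le (a * (|d + 1| - 1)) (i * |d + 1|)
    _ ≤ |a| * |d| + q * (1 + |d|) := by gcongr
    _ ≤ (1 + |a|) * (|d| + q * (1 + |d|)) := by
      have : 0 ≤ |d| + |a| * (q * (1 + |d|)) := by positivity
      linarith

namespace IsCellSolution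

variable {N : ℕ} {s : ℝ} {g : EN N → ℝ} {W : ℝ → ℝ} {σ : ℝ → EN N → ℝ} {p : EN N}
  {L a₀ η A S K : ℝ} {U : ℝ → EN N × ℝ → ℝ}

lemma le_linear (hU : IsCellSolution N s g W σ p L a₀ η U) (hD : IsCellData N s g W σ A S K)
    (hη : 0 ≤ η) {M : ℝ} (h0 : ∀ Y, U 0 Y ≤ M) {t : ℝ} (ht : 0 ≤ t) (Y : EN N × ℝ) :
    U t Y ≤ M + (L + A + S + η * a₀) * t := by
  refine hU.subsolution.le_linear hD.kernel hU.continuousOn hU.bounded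
    (κ := η * (1 + |a₀|)) (by positivity) (fun t ht Y d I q hq => ?_) h0 ht Y
  have hq0 : 0 ≤ q := by linarith [hq Y]
  have hham : (a₀ + (⨅ Y', U t Y') - U t Y) * |d + 1| ≤
      a₀ + (1 + |a₀|) * (|d| + q * (1 + |d|)) := calc
    _ ≤ (a₀ + 0) * |d + 1| := by gcongr; linarith [hU.iInf_le ht.le Y]
    _ ≤ _ := by linarith [le_of_abs_le (abs_add_mul_abs_add_one_sub_le (a := a₀) (d := d)
      (abs_zero.trans_le hq0))]
  have := mul_le_mul_of_nonneg_left hham hη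
  rw [cellRHS]
  linarith [neg_le_of_abs_le (hD.abs_deriv_le (U t Y + ⟪p, Y.1⟫ + Y.2)),
    le_of_abs_le (hD.abs_forcing_le t Y.1 ht.le)]

lemma linear_le (hU : IsCellSolution N s g W σ p L a₀ η U) (hD : IsCellData N s g W σ A S K)
    (hη : 0 ≤ η) {M : ℝ} (h0 : ∀ Y, M ≤ U 0 Y) {t : ℝ} (ht : 0 ≤ t) (Y : EN N × ℝ) :
    M + (L - A - S + η * a₀) * t ≤ U t Y := by
  have h := IsSubsolution.le_linear hU.supersolution hD.kernel hU.continuousOn.neg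
    (by simpa only [abs_neg] using hU.bounded) (M := -M) (c := -(L - A - S + η * a₀))
    (κ := η * (1 + |a₀|)) (by positivity) (fun t ht Y d I q hq => ?_) (fun Y => neg_le_neg (h0 Y))
    ht Y
  · linarith
  have hgap : |(⨅ Y', U t Y') - U t Y| ≤ q := abs_sub_le_iff.2
    ⟨by linarith [hU.iInf_le ht.le Y, hq Y],
      sub_le_comm.1 (le_ciInf fun Y' => by linarith [hq Y'])⟩
  have hham := neg_le_of_abs_le (abs_add_mul_abs_add_one_sub_le (a := a₀) (d := -d) hgap)
  rw [abs_neg, ← add_sub_assoc] at hham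
  have := mul_le_mul_of_nonneg_left hham hη
  rw [cellRHS]
  linarith [le_of_abs_le (hD.abs_deriv_le (U t Y + ⟪p, Y.1⟫ + Y.2)),
    neg_le_of_abs_le (hD.abs_forcing_le t Y.1 ht.le)]

end IsCellSolution

/-! ### Doubling of variables -/

section Doubling

variable {N : ℕ} {u v : ℝ → EN N × ℝ → ℝ}

/-- The domain of pairs of points `((t, Y), (t', Z))`. The second time ranges over a longer interval
so that `t < T` and `|t - t'| < 1` place both times in the interior. -/
def doubledDomain (N : ℕ) (T : ℝ) : Set ((ℝ × EN N × ℝ) × ℝ × EN N × ℝ) :=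
  (Icc 0 T ×ˢ univ) ×ˢ (Icc 0 (T + 1) ×ˢ univ)

/-- The difference `u(t, Y) - v(t', Z)`, with quadratic penalisations of `Y - Z` and `t - t'`. -/
noncomputable def doubled (u v : ℝ → EN N × ℝ → ℝ) (b β : ℝ)
    (x : (ℝ × EN N × ℝ) × ℝ × EN N × ℝ) : ℝ :=
  u x.1.1 x.1.2 - v x.2.1 x.2.2 - (b * sqDist x.1.2 x.2.2 + β * (x.1.1 - x.2.1) ^ 2)

lemma doubled_le_sub {b β : ℝ} (hb : 0 ≤ b) (hβ : 0 ≤ β) (x : (ℝ × EN N × ℝ) × ℝ × EN N × ℝ) :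
    doubled u v b β x ≤ u x.1.1 x.1.2 - v x.2.1 x.2.2 := by
  unfold doubled sqDist
  exact sub_le_self _ (by positivity)

lemma sqDist_nonneg (Y Z : EN N × ℝ) : 0 ≤ sqDist Y Z := by
  unfold sqDist
  positivity

lemma sqDist_comm (Y Z : EN N × ℝ) : sqDist Y Z = sqDist Z Y := by
  rw [sqDist, sqDist, norm_sub_rev, sub_sq_comm]

lemma mem_Ioo_of_abs_sub_lt_add {t t' T : ℝ} (ht : t ∈ Icc 0 T)
    (hsub : |t - t'| < 1) (hadd : |t - t'| < t + t') (hT : t ≠ T) :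
    t ∈ Ioo 0 T ∧ t' ∈ Ioo 0 (T + 1) := by
  have htT : t < T := ht.2.lt_of_ne hT
  have hsub := abs_lt.1 hsub
  have hadd := abs_lt.1 hadd
  exact ⟨⟨by linarith, htT⟩, by linarith, by linarith⟩

variable {s : ℝ} {g : EN N → ℝ}

/-- The sub- and the supersolution inequality at a maximum of the doubled function are tested with
the same quadratic functions, so that their time derivatives cancel. -/
lemma IsSubsolution.doubling {F G : ℝ → EN N × ℝ → ℝ → ℝ → ℝ} (hu : IsSubsolution N s g F u)
    (hv : IsSupersolution N s g G v) (hk : IsLevyKernel N s g) {χ : EN N × ℝ → ℝ} {B : ℝ}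
    (hχ : IsBump χ B) {α ρ : ℝ → ℝ} (hα : ContDiff ℝ 2 α) (hρ : ContDiff ℝ 2 ρ)
    {α' ρ' t t' T b β r : ℝ} (hα' : HasDerivAt α α' t) (hρ' : HasDerivAt ρ ρ' t)
    {e Y Z : EN N × ℝ} (hr : 0 < r) (hr1 : r ≤ 1) (ht : t ∈ Ioo 0 T) (ht' : t' ∈ Ioo 0 (T + 1))
    (hmax : IsMaxOn (fun x => doubled u v b β x - α x.1.1 - ρ x.1.1 * χ (x.1.2 - e))
      (doubledDomain N T) ((t, Y), t', Z)) :
    ∃ ω I J : ℝ, |ω| ≤ B ∧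
      I ≤ (|b| + |ρ t| * B) * nearMass N s g r + levyI2 N s g (fun y => u t (y, Y.2)) r Y.1 ∧
      levyI2 N s g (fun y => v t' (y, Z.2)) r Z.1 - |b| * nearMass N s g r ≤ J ∧
      α' + ρ' * χ (Y - e) + G t' Z (2 * b * (Y.2 - Z.2)) J ≤
        F t Y (2 * b * (Y.2 - Z.2) + ρ t * ω) I := by
  have hle : ∀ {a a' : ℝ}, a ∈ Icc 0 T → a' ∈ Icc 0 (T + 1) → ∀ Y' Z',
      doubled u v b β ((a, Y'), a', Z') - α a - ρ a * χ (Y' - e) ≤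
        doubled u v b β ((t, Y), t', Z) - α t - ρ t * χ (Y - e) := fun ha ha' Y' Z' =>
    hmax (mk_mem_prod (mk_mem_prod ha (mem_univ Y')) (mk_mem_prod ha' (mem_univ Z')))
  have hdu : HasDerivAt (fun a => β * (a - t') ^ 2 + α a) (2 * β * (t - t') + α') t :=
    (((((hasDerivAt_id t).sub_const t').pow 2).const_mul β).add hα').congr_deriv (by
      simp only [id, Nat.cast_ofNat, Nat.reduceSub, pow_one, mul_one]; ring)
  have hdv : HasDerivAt (fun a => β * (t - a) ^ 2) (-(2 * β * (t - t'))) t' :=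
    ((((hasDerivAt_id t').const_sub t).pow 2).const_mul β).congr_deriv (by
      simp only [id, Nat.cast_ofNat, Nat.reduceSub, pow_one]; ring)
  obtain ⟨ω, I, hω, hI, hsub⟩ := hu.apply_testFn hk hχ (by fun_prop) hρ hdu hρ' b Z e Y hr hr1 ht
    fun a ha Y' => by
      have h := hle ha (Ioo_subset_Icc_self ht') Y' Z
      simp only [doubled] at h
      simp only [testFn]
      linarith
  obtain ⟨ω', J, -, hJ, hsup⟩ := IsSubsolution.apply_testFn hv hk hχ (ρ := fun _ => 0) (by fun_prop)
    contDiff_const hdv (hasDerivAt_const t' _) b Y 0 Z hr hr1 ht' fun a ha Z' => by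
      have h := hle (Ioo_subset_Icc_self ht) ha Y Z'
      simp only [doubled] at h
      simp only [testFn, sqDist_comm _ Y]
      linarith
  refine ⟨ω, I, -J, hω, hI, ?_, ?_⟩
  · rw [levyI2_neg, abs_zero, zero_mul, add_zero] at hJ
    linarith
  · have hd : -(2 * b * (Z.2 - Y.2) + 0 * ω') = 2 * b * (Y.2 - Z.2) := by ring
    rw [hd, zero_mul, add_zero] at hsup
    linarith

end Doubling

/-! ### Comparison principle -/

lemma exists_penalization_le {X : Type*} {D : Set X} {f g : X → ℝ} (hf : BddAbove (f '' D))
    (hg : ∀ x ∈ D, 0 ≤ g x) {x₀ : X} (hx₀ : x₀ ∈ D) (hgx₀ : g x₀ = 0) {ε : ℝ} (hε : 0 < ε) :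
    ∃ β ≥ 1, ∀ δ, ∀ x ∈ D, (∀ y ∈ D, f y - β * g y ≤ f x - β * g x + δ) →
      β * g x ≤ 2 * (ε + δ) := by
  obtain ⟨C, hC⟩ := hf
  set θ : ℕ → ℝ := fun n => sSup ((fun x => f x - 2 ^ n * g x) '' D)
  have hle : ∀ n, ∀ x ∈ D, f x - 2 ^ n * g x ≤ θ n := fun n x hx => by
    refine le_csSup ⟨C, forall_mem_image.2 fun y hy => ?_⟩ (mem_image_of_mem _ hx)
    have := mul_nonneg (by positivity : (0 : ℝ) ≤ 2 ^ n) (hg y hy)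
    linarith [hC (mem_image_of_mem f hy)]
  have hanti : Antitone θ := antitone_nat_of_succ_le fun n =>
    csSup_le ⟨_, mem_image_of_mem _ hx₀⟩ <| forall_mem_image.2 fun x hx => by
      have := mul_nonneg (by positivity : (0 : ℝ) ≤ 2 ^ n) (hg x hx)
      rw [pow_succ]
      linarith [hle n x hx]
  have hbdd : BddBelow (range θ) := ⟨f x₀, forall_mem_range.2 fun n => by
    simpa [hgx₀] using hle n x₀ hx₀⟩
  have hlim := tendsto_atTop_ciInf hanti hbdd
  obtain ⟨n, hn⟩ := ((hlim.sub (hlim.comp (tendsto_add_atTop_nat 1))).eventually_lt_const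
    (by simpa using hε)).exists
  refine ⟨2 ^ (n + 1), one_le_pow₀ one_le_two, fun δ x hx hnear => ?_⟩
  have hsup : θ (n + 1) ≤ f x - 2 ^ (n + 1) * g x + δ :=
    csSup_le ⟨_, mem_image_of_mem _ hx₀⟩ (forall_mem_image.2 hnear)
  simp only [Function.comp_apply] at hn
  rw [pow_succ] at hsup ⊢
  linarith [hle n x hx]

/-- The doubled function with equal penalisations, discounted in time so that a zeroth-order term
with Lipschitz constant `K` is absorbed. -/
noncomputable def discounted {N : ℕ} (K : ℝ) (u v : ℝ → EN N × ℝ → ℝ) (β : ℝ)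
    (x : (ℝ × EN N × ℝ) × ℝ × EN N × ℝ) : ℝ :=
  Real.exp (-(2 * K * x.1.1)) * doubled u v β β x

lemma isMaxOn_undiscount {X : Type*} {D : Set X} {τ f ψ : X → ℝ} {x₀ : X}
    (h : IsMaxOn (fun x => Real.exp (-τ x) * f x + ψ x) D x₀) :
    IsMaxOn (fun x => f x - Real.exp (τ x) * (Real.exp (-τ x₀) * f x₀ + ψ x₀) +
      Real.exp (τ x) * ψ x) D x₀ := by
  have hmul : ∀ x, f x - Real.exp (τ x) * (Real.exp (-τ x₀) * f x₀ + ψ x₀) +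
      Real.exp (τ x) * ψ x = Real.exp (τ x) *
        (Real.exp (-τ x) * f x + ψ x - (Real.exp (-τ x₀) * f x₀ + ψ x₀)) := fun x => by
    have : Real.exp (τ x) * Real.exp (-τ x) = 1 := by rw [← Real.exp_add]; simp
    linear_combination (-f x) * this
  intro x hx
  simp only [mem_ofPred_eq, hmul, sub_self, mul_zero]
  exact mul_nonpos_of_nonneg_of_nonpos (Real.exp_pos _).le (sub_nonpos.2 (h hx))

lemma IsSubsolution.discounted_doubling {N : ℕ} {s : ℝ} {g : EN N → ℝ}
    {F G : ℝ → EN N × ℝ → ℝ → ℝ → ℝ} {u v : ℝ → EN N × ℝ → ℝ} (hu : IsSubsolution N s g F u)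
    (hv : IsSupersolution N s g G v) (hk : IsLevyKernel N s g) {χ : EN N × ℝ → ℝ} {B : ℝ}
    (hχ : IsBump χ B) {K t t' T β δ r : ℝ} {e Y Z : EN N × ℝ} (ht : t ∈ Ioo 0 T)
    (ht' : t' ∈ Ioo 0 (T + 1)) (hβ : 0 ≤ β) (hδ : 0 ≤ δ) (hr : 0 < r) (hr1 : r ≤ 1)
    (hmax : IsMaxOn (fun x => discounted K u v β x + δ * χ (x.1.2 - e)) (doubledDomain N T)
      ((t, Y), t', Z)) :
    ∃ ω I J : ℝ, |ω| ≤ B ∧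
      I ≤ (β + Real.exp (2 * K * t) * δ * B) * nearMass N s g r +
        levyI2 N s g (fun y => u t (y, Y.2)) r Y.1 ∧
      levyI2 N s g (fun y => v t' (y, Z.2)) r Z.1 - β * nearMass N s g r ≤ J ∧
      2 * K * doubled u v β β ((t, Y), t', Z) + G t' Z (2 * β * (Y.2 - Z.2)) J ≤
        F t Y (2 * β * (Y.2 - Z.2) + -(Real.exp (2 * K * t) * δ) * ω) I := by
  set M := Real.exp (-(2 * K * t)) * doubled u v β β ((t, Y), t', Z) + δ * χ (Y - e) with hM
  have hexp : HasDerivAt (fun a => Real.exp (2 * K * a)) (Real.exp (2 * K * t) * (2 * K)) t := by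
    simpa using ((hasDerivAt_id t).const_mul (2 * K)).exp
  obtain ⟨ω, I, J, hω, hI, hJ, hineq⟩ := hu.doubling hv hk hχ
    (α := fun a => Real.exp (2 * K * a) * M) (ρ := fun a => -(Real.exp (2 * K * a) * δ))
    (by fun_prop) (by fun_prop) (hexp.mul_const M) (hexp.mul_const δ).fun_neg hr hr1 ht ht' (e := e)
    (b := β) (β := β) (by
      convert isMaxOn_undiscount (τ := fun x : (ℝ × EN N × ℝ) × ℝ × EN N × ℝ => 2 * K * x.1.1) hmax
        using 2
      ring)
  have hrate : Real.exp (2 * K * t) * (2 * K) * M +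
      -(Real.exp (2 * K * t) * (2 * K) * δ) * χ (Y - e) =
      2 * K * doubled u v β β ((t, Y), t', Z) := by
    have : Real.exp (2 * K * t) * Real.exp (-(2 * K * t)) = 1 := by rw [← Real.exp_add]; simp
    rw [hM]
    linear_combination (2 * K * doubled u v β β ((t, Y), t', Z)) * this
  rw [abs_neg, abs_of_nonneg (by positivity : 0 ≤ Real.exp (2 * K * t) * δ), abs_of_nonneg hβ] at hI
  rw [abs_of_nonneg hβ] at hJ
  rw [hrate] at hineq
  exact ⟨ω, I, J, hω, hI, hJ, hineq⟩

namespace IsCellSolution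

variable {N : ℕ} {s : ℝ} {g : EN N → ℝ} {W : ℝ → ℝ} {σ : ℝ → EN N → ℝ} {p : EN N}
  {L a₀ η A S K : ℝ} {U V : ℝ → EN N × ℝ → ℝ}

lemma cellRHS_sub_cellRHS_le (hU : IsCellSolution N s g W σ p L a₀ η U)
    (hD : IsCellData N s g W σ A S K) (hη : 0 ≤ η) {t t' R q H c d I J : ℝ} {Y Z : EN N × ℝ}
    (ht : 0 ≤ t) (hincr : ∀ w, U t (Y + w) - U t Y ≤ V t' (Z + w) - V t' Z + q)
    (hH : |a₀ + (⨅ Y', U t Y') - U t Y| ≤ H) (hle : V t' Z ≤ U t Y) (hR : ‖Y.1 - Z.1‖ ≤ R)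
    (hR' : |Y.2 - Z.2| ≤ R) (hRt : |t - t'| ≤ R) :
    cellRHS N W σ p L a₀ η U t Y (d + c) I - cellRHS N W σ p L a₀ η V t' Z d J ≤
      I - J + K * (U t Y - V t' Z) + K * ((‖p‖ + 3) * R) + η * (q * (|d| + 1) + H * |c|) := by
  have hK : 0 ≤ K := zero_le_one.trans hD.one_le
  have hq : 0 ≤ q := by simpa using hincr 0
  have hinf : (⨅ Y', U t Y') - U t Y - q + V t' Z ≤ ⨅ Z', V t' Z' := le_ciInf fun Z' => by
    have h := hincr (Z' - Z)
    rw [add_sub_cancel] at h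
    linarith [hU.iInf_le ht (Y + (Z' - Z))]
  have hpot : deriv W (V t' Z + ⟪p, Z.1⟫ + Z.2) - deriv W (U t Y + ⟪p, Y.1⟫ + Y.2) ≤
      K * (U t Y - V t' Z + (‖p‖ * R + R)) := by
    refine (le_of_abs_le (hD.lipschitz_deriv _ _)).trans (mul_le_mul_of_nonneg_left ?_ hK)
    have hinner : |⟪p, Y.1 - Z.1⟫| ≤ ‖p‖ * R := (abs_real_inner_le_norm _ _).trans (by gcongr)
    rw [inner_sub_right] at hinner
    rw [abs_sub_comm, abs_le]
    constructor <;> linarith [abs_le.1 hinner, abs_le.1 hR']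
  have hforce : σ t Y.1 - σ t' Z.1 ≤ K * (R + R) :=
    (le_of_abs_le (hD.lipschitz_forcing _ _ _ _)).trans (by gcongr)
  have hham : (a₀ + (⨅ Y', U t Y') - U t Y) * |d + c + 1| -
      (a₀ + (⨅ Z', V t' Z') - V t' Z) * |d + 1| ≤ q * (|d| + 1) + H * |c| := calc
    _ = (a₀ + (⨅ Y', U t Y') - U t Y) * (|d + c + 1| - |d + 1|) +
        ((⨅ Y', U t Y') - U t Y - ((⨅ Z', V t' Z') - V t' Z)) * |d + 1| := by ring
    _ ≤ H * |c| + q * (|d| + 1) := by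
      refine add_le_add ((le_abs_self _).trans ?_) ?_
      · rw [abs_mul]
        refine mul_le_mul hH ?_ (abs_nonneg _) ((abs_nonneg _).trans hH)
        simpa using abs_abs_sub_abs_le_abs_sub (d + c + 1) (d + 1)
      · refine mul_le_mul (by linarith) (abs_add_le d 1 |>.trans (by simp)) (abs_nonneg _) hq
    _ = _ := add_comm _ _
  have := mul_le_mul_of_nonneg_left hham hη
  simp only [cellRHS]
  linarith

lemma discounted_max_le (hU : IsCellSolution N s g W σ p L a₀ η U)
    (hV : IsCellSolution N s g W σ p L a₀ η V) (hD : IsCellData N s g W σ A S K) (hη : 0 ≤ η)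
    {χ : EN N × ℝ → ℝ} {B : ℝ} (hχ : IsBump χ B) {t t' T β δ r R H : ℝ} {e Y Z : EN N × ℝ}
    (ht : t ∈ Ioo 0 T) (ht' : t' ∈ Ioo 0 (T + 1)) (hβ : 0 ≤ β) (hδ : 0 ≤ δ) (hr : 0 < r)
    (hr1 : r ≤ 1) (hH : |a₀ + (⨅ Y', U t Y') - U t Y| ≤ H) (hle : V t' Z ≤ U t Y)
    (hR : ‖Y.1 - Z.1‖ ≤ R) (hR' : |Y.2 - Z.2| ≤ R) (hRt : |t - t'| ≤ R)
    (hmax : IsMaxOn (fun x => discounted K U V β x + δ * χ (x.1.2 - e)) (doubledDomain N T)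
      ((t, Y), t', Z))
    (hincr : ∀ w, U t (Y + w) - U t Y ≤ V t' (Z + w) - V t' Z + Real.exp (2 * K * t) * δ) :
    2 * K * doubled U V β β ((t, Y), t', Z) ≤
      K * (U t Y - V t' Z) + 2 * β * nearMass N s g r + K * ((‖p‖ + 3) * R) +
      Real.exp (2 * K * t) * δ * (B * nearMass N s g r + farMass N s g r +
        η * (2 * β * R + 1 + H * B)) := by
  set Q := Real.exp (2 * K * t) * δ with hQ
  have hQ0 : 0 ≤ Q := by positivity
  obtain ⟨ω, I, J, hω, hI, hJ, hineq⟩ := hU.subsolution.discounted_doubling hV.supersolution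
    hD.kernel hχ ht ht' hβ hδ hr hr1 hmax
  rw [← hQ] at hI hineq
  obtain ⟨MU, hMU⟩ := hU.bounded_slice ht.1.le
  obtain ⟨MV, hMV⟩ := hV.bounded_slice ht'.1.le
  have hfar := hD.kernel.levyI2_le_add_farMass hr (u := fun y => U t (y, Y.2))
    (v := fun y => V t' (y, Z.2)) (x := Y.1) (x' := Z.1) (c := Q)
    ((hU.continuous_slice ht.1.le).comp (by fun_prop))
    ((hV.continuous_slice ht'.1.le).comp (by fun_prop)) (fun y => hMU _) (fun y => hMV _)
    fun z => by simpa only [Prod.add_def, add_zero] using hincr (z, 0)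
  have hdiff := hU.cellRHS_sub_cellRHS_le hD hη (d := 2 * β * (Y.2 - Z.2)) (c := -Q * ω) (I := I)
    (J := J) ht.1.le hincr hH hle hR hR' hRt
  have hH0 := (abs_nonneg _).trans hH
  have hd : |2 * β * (Y.2 - Z.2)| ≤ 2 * β * R := by
    rw [abs_mul, abs_of_nonneg (by positivity : 0 ≤ 2 * β)]
    gcongr
  have hc : |-Q * ω| ≤ Q * B := by
    rw [abs_mul, abs_neg, abs_of_nonneg hQ0]
    gcongr
  have hham : η * (Q * (|2 * β * (Y.2 - Z.2)| + 1) + H * |-Q * ω|) ≤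
      η * (Q * (2 * β * R + 1) + H * (Q * B)) := by gcongr
  linarith

end IsCellSolution

section Localisation

variable {N : ℕ} {u v : ℝ → EN N × ℝ → ℝ} {K T : ℝ}

lemma norm_sub_le_of_sqDist_le {Y Z : EN N × ℝ} {c : ℝ} (h : sqDist Y Z ≤ c) :
    ‖Z - Y‖ ≤ c + 1 := by
  unfold sqDist at h
  rw [norm_sub_rev, Prod.norm_def, Prod.fst_sub, Prod.snd_sub, Real.norm_eq_abs]
  refine max_le ?_ ?_
  · nlinarith [sq_nonneg (‖Y.1 - Z.1‖ - 1), sq_nonneg (Y.2 - Z.2)]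
  · nlinarith [sq_nonneg (|Y.2 - Z.2| - 1), sq_abs (Y.2 - Z.2), sq_nonneg ‖Y.1 - Z.1‖]

lemma isClosed_doubledDomain (N : ℕ) (T : ℝ) : IsClosed (doubledDomain N T) :=
  (isClosed_Icc.prod isClosed_univ).prod (isClosed_Icc.prod isClosed_univ)

lemma isBounded_doubledDomain_inter (e : EN N × ℝ) (T c : ℝ) :
    Bornology.IsBounded
      {x | x ∈ doubledDomain N T ∧ sqDist x.1.2 x.2.2 ≤ c ∧ ‖x.1.2 - e‖ ≤ 1} := by
  refine (((isBounded_Icc 0 T).prod (isBounded_closedBall (x := e) (r := 1))).prod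
    ((isBounded_Icc 0 (T + 1)).prod (isBounded_closedBall (x := e) (r := c + 1 + 1)))).subset ?_
  rintro ⟨⟨t, Y⟩, t', Z⟩ ⟨⟨⟨ht, -⟩, ht', -⟩, hsq, hY⟩
  refine ⟨⟨ht, mem_closedBall_iff_norm.2 hY⟩, ht', mem_closedBall_iff_norm.2 ?_⟩
  exact (norm_sub_le_norm_sub_add_norm_sub Z Y e).trans
    (add_le_add (norm_sub_le_of_sqDist_le hsq) hY)

lemma continuousOn_doubled
    (hu : ContinuousOn (fun q : ℝ × EN N × ℝ => u q.1 q.2) (Ici 0 ×ˢ univ))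
    (hv : ContinuousOn (fun q : ℝ × EN N × ℝ => v q.1 q.2) (Ici 0 ×ˢ univ)) (b β : ℝ) :
    ContinuousOn (doubled u v b β) (doubledDomain N T) := by
  have hu' := hu.comp (s := doubledDomain N T) continuous_fst.continuousOn
    fun x hx => ⟨hx.1.1.1, trivial⟩
  have hv' := hv.comp (s := doubledDomain N T) continuous_snd.continuousOn
    fun x hx => ⟨hx.2.1.1, trivial⟩
  refine (hu'.sub hv').sub (Continuous.continuousOn ?_)
  unfold sqDist
  fun_prop

lemma exp_mul_sub_le {H : ℝ} (hK : 0 ≤ K) (hu : ∀ t ∈ Icc 0 (T + 1), ∀ Y, |u t Y| ≤ H)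
    (hv : ∀ t ∈ Icc 0 (T + 1), ∀ Y, |v t Y| ≤ H) {x : (ℝ × EN N × ℝ) × ℝ × EN N × ℝ}
    (hx : x ∈ doubledDomain N T) :
    Real.exp (-(2 * K * x.1.1)) * (u x.1.1 x.1.2 - v x.2.1 x.2.2) ≤ 2 * H := by
  obtain ⟨⟨⟨ht0, htT⟩, -⟩, ht', -⟩ := hx
  have hexp : Real.exp (-(2 * K * x.1.1)) ≤ 1 :=
    Real.exp_le_one_iff.2 (neg_nonpos.2 (by positivity))
  have hH : 0 ≤ H := (abs_nonneg _).trans (hv x.2.1 ht' x.2.2)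
  have hdiff : u x.1.1 x.1.2 - v x.2.1 x.2.2 ≤ 2 * H := by
    linarith [le_of_abs_le (hu x.1.1 ⟨ht0, by linarith⟩ x.1.2),
      neg_le_of_abs_le (hv x.2.1 ht' x.2.2)]
  calc _ ≤ Real.exp (-(2 * K * x.1.1)) * (2 * H) := by gcongr
    _ ≤ 2 * H := mul_le_of_le_one_left (by positivity) hexp

lemma discounted_le {H β : ℝ} (hK : 0 ≤ K) (hβ : 1 ≤ β)
    (hu : ∀ t ∈ Icc 0 (T + 1), ∀ Y, |u t Y| ≤ H) (hv : ∀ t ∈ Icc 0 (T + 1), ∀ Y, |v t Y| ≤ H)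
    {x : (ℝ × EN N × ℝ) × ℝ × EN N × ℝ} (hx : x ∈ doubledDomain N T) :
    discounted K u v β x ≤ 2 * H - Real.exp (-(2 * K * T)) * sqDist x.1.2 x.2.2 := by
  have hsq := sqDist_nonneg x.1.2 x.2.2
  have hpen : sqDist x.1.2 x.2.2 ≤ β * sqDist x.1.2 x.2.2 + β * (x.1.1 - x.2.1) ^ 2 := by
    have : 0 ≤ β * (x.1.1 - x.2.1) ^ 2 := by positivity
    linarith [le_mul_of_one_le_left hsq hβ]
  have hexp : Real.exp (-(2 * K * T)) * sqDist x.1.2 x.2.2 ≤ Real.exp (-(2 * K * x.1.1)) *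
      (β * sqDist x.1.2 x.2.2 + β * (x.1.1 - x.2.1) ^ 2) := by
    gcongr
    exact hx.1.1.2
  rw [discounted, doubled, mul_sub]
  linarith [exp_mul_sub_le hK hu hv hx]

lemma exists_isMaxOn_discounted {χ : EN N × ℝ → ℝ} {B H β δ : ℝ} (hχ : IsBump χ B) (hK : 0 ≤ K)
    (hT : 0 ≤ T) (hβ : 1 ≤ β)
    (hu : ContinuousOn (fun q : ℝ × EN N × ℝ => u q.1 q.2) (Ici 0 ×ˢ univ))
    (hv : ContinuousOn (fun q : ℝ × EN N × ℝ => v q.1 q.2) (Ici 0 ×ˢ univ))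
    (huH : ∀ t ∈ Icc 0 (T + 1), ∀ Y, |u t Y| ≤ H) (hvH : ∀ t ∈ Icc 0 (T + 1), ∀ Y, |v t Y| ≤ H)
    (hδ : 0 < δ) :
    ∃ e, ∃ x ∈ doubledDomain N T,
      IsMaxOn (fun x => discounted K u v β x + δ * χ (x.1.2 - e)) (doubledDomain N T) x ∧
      ∀ y ∈ doubledDomain N T, discounted K u v β y ≤ discounted K u v β x + δ := by
  refine hχ.exists_isMaxOn_add (D := doubledDomain N T) (f := discounted K u v β)
    (isClosed_doubledDomain N T) ⟨((0, 0), 0, 0), ⟨⟨le_rfl, hT⟩, trivial⟩, ⟨le_rfl, by linarith⟩,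
      trivial⟩ ((by fun_prop : Continuous fun x : (ℝ × EN N × ℝ) × ℝ × EN N × ℝ =>
        Real.exp (-(2 * K * x.1.1))).continuousOn.mul (continuousOn_doubled hu hv β β))
    ⟨2 * H, forall_mem_image.2 fun x hx => (discounted_le hK hβ huH hvH hx).trans
      (sub_le_self _ (mul_nonneg (Real.exp_pos _).le (sqDist_nonneg _ _)))⟩
    (by fun_prop) (fun e c => ?_) hδ
  refine (isBounded_doubledDomain_inter e T ((2 * H - c) / Real.exp (-(2 * K * T)))).subset ?_
  rintro x ⟨hx, hc, he⟩
  refine ⟨hx, (le_div_iff₀ (Real.exp_pos _)).2 ?_, he⟩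
  linarith [discounted_le hK hβ huH hvH hx]

end Localisation

section NearMaxima

variable {N : ℕ} {u v : ℝ → EN N × ℝ → ℝ} {K T : ℝ}

lemma increment_le_of_discounted_le {β δ t t' : ℝ} {Y Z : EN N × ℝ}
    (hx : ((t, Y), t', Z) ∈ doubledDomain N T)
    (hnear : ∀ y ∈ doubledDomain N T,
      discounted K u v β y ≤ discounted K u v β ((t, Y), t', Z) + δ) (w : EN N × ℝ) :
    u t (Y + w) - u t Y ≤ v t' (Z + w) - v t' Z + Real.exp (2 * K * t) * δ := by
  have h := hnear ((t, Y + w), t', Z + w) ⟨⟨hx.1.1, trivial⟩, hx.2.1, trivial⟩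
  have hsq : sqDist (Y + w) (Z + w) = sqDist Y Z := by simp [sqDist]
  simp only [discounted, doubled, hsq, Real.exp_neg, inv_mul_eq_div] at h
  rw [← sub_le_iff_le_add', ← sub_div, div_le_iff₀ (Real.exp_pos _)] at h
  linarith

lemma exists_discounted_penalization_le {H ε : ℝ} (hK : 0 ≤ K) (hT : 0 ≤ T)
    (hu : ∀ t ∈ Icc 0 (T + 1), ∀ Y, |u t Y| ≤ H) (hv : ∀ t ∈ Icc 0 (T + 1), ∀ Y, |v t Y| ≤ H)
    (hε : 0 < ε) :
    ∃ β ≥ 1, ∀ δ, ∀ x ∈ doubledDomain N T,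
      (∀ y ∈ doubledDomain N T, discounted K u v β y ≤ discounted K u v β x + δ) →
      β * (sqDist x.1.2 x.2.2 + (x.1.1 - x.2.1) ^ 2) ≤
        Real.exp (2 * K * x.1.1) * (2 * (ε + δ)) := by
  have hsplit : ∀ β x, discounted K u v β x =
      Real.exp (-(2 * K * x.1.1)) * (u x.1.1 x.1.2 - v x.2.1 x.2.2) -
        β * (Real.exp (-(2 * K * x.1.1)) * (sqDist x.1.2 x.2.2 + (x.1.1 - x.2.1) ^ 2)) :=
    fun β x => by simp only [discounted, doubled]; ring
  obtain ⟨β, hβ, h⟩ := exists_penalization_le (D := doubledDomain N T)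
    (f := fun x => Real.exp (-(2 * K * x.1.1)) * (u x.1.1 x.1.2 - v x.2.1 x.2.2))
    (g := fun x => Real.exp (-(2 * K * x.1.1)) * (sqDist x.1.2 x.2.2 + (x.1.1 - x.2.1) ^ 2))
    (x₀ := ((0, 0), 0, 0)) ⟨2 * H, forall_mem_image.2 fun x hx => exp_mul_sub_le hK hu hv hx⟩
    (fun x _ => mul_nonneg (Real.exp_pos _).le (add_nonneg (sqDist_nonneg _ _) (sq_nonneg _)))
    ⟨⟨⟨le_rfl, hT⟩, trivial⟩, ⟨le_rfl, by linarith⟩, trivial⟩ (by simp [sqDist]) hε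
  refine ⟨β, hβ, fun δ x hx hnear => ?_⟩
  have hpen := h δ x hx fun y hy => by simpa only [hsplit] using hnear y hy
  rwa [Real.exp_neg, mul_left_comm, inv_mul_le_iff₀ (Real.exp_pos _)] at hpen

lemma mem_Ioo_of_exp_mul_le {C θ R t t' : ℝ} (hK : 0 ≤ K) (hC : 0 ≤ C) (hθ : 0 < θ)
    (hT : C * (2 * T + 1) < Real.exp (2 * K * T) * θ) (hR1 : R < 1) (hCR : C * R < θ)
    (ht : t ∈ Icc 0 T) (ht' : t' ∈ Icc 0 (T + 1)) (hclose : |t - t'| ≤ R)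
    (hle : Real.exp (2 * K * t) * θ ≤ C * (t + t')) : t ∈ Ioo 0 T ∧ t' ∈ Ioo 0 (T + 1) := by
  have hexp : 1 ≤ Real.exp (2 * K * t) := Real.one_le_exp (by have := ht.1; positivity)
  have hsum : R < t + t' := lt_of_not_ge fun h => by
    linarith [mul_le_mul_of_nonneg_left h hC, le_mul_of_one_le_left hθ.le hexp]
  have htT : t ≠ T := fun h => by
    subst h
    linarith [mul_le_mul_of_nonneg_left (show t + t' ≤ 2 * t + 1 by linarith [ht'.2]) hC]
  exact mem_Ioo_of_abs_sub_lt_add ht (hclose.trans_lt hR1) (hclose.trans_lt hsum) htT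

lemma interior_of_near_max {C θ R β ε δ t₁ : ℝ} {Y₁ : EN N × ℝ}
    {x : (ℝ × EN N × ℝ) × ℝ × EN N × ℝ} (hK : 0 ≤ K) (hC : 0 ≤ C)
    (hgrowth : ∀ t ≥ 0, ∀ t' ≥ 0, ∀ Y Z, u t Y - v t' Z ≤ C * (t + t'))
    (hθ : 0 < θ) (ht₁ : t₁ ∈ Icc 0 T)
    (hgap : 2 * θ ≤ Real.exp (-(2 * K * t₁)) * (u t₁ Y₁ - v t₁ Y₁))
    (hT : C * (2 * T + 1) < Real.exp (2 * K * T) * θ) (hR : 0 ≤ R) (hR1 : R < 1)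
    (hCR : C * R < θ) (hβ : 1 ≤ β) (hε : 4 * Real.exp (2 * K * T) * ε ≤ R ^ 2)
    (hεθ : ε ≤ θ) (hδ : 0 ≤ δ) (hδε : δ ≤ ε) (hx : x ∈ doubledDomain N T)
    (hnear : ∀ y ∈ doubledDomain N T, discounted K u v β y ≤ discounted K u v β x + δ)
    (hpen : β * (sqDist x.1.2 x.2.2 + (x.1.1 - x.2.1) ^ 2) ≤
      Real.exp (2 * K * x.1.1) * (2 * (ε + δ))) :
    x.1.1 ∈ Ioo 0 T ∧ x.2.1 ∈ Ioo 0 (T + 1) ∧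
      sqDist x.1.2 x.2.2 + (x.1.1 - x.2.1) ^ 2 ≤ R ^ 2 ∧
      Real.exp (2 * K * x.1.1) * θ ≤ doubled u v β β x ∧
      u x.1.1 x.1.2 - v x.2.1 x.2.2 ≤ doubled u v β β x + Real.exp (2 * K * x.1.1) * (4 * ε) := by
  obtain ⟨⟨⟨t, Y⟩, t', Z⟩, rfl⟩ : ∃ z, z = x := ⟨x, rfl⟩
  obtain ⟨⟨ht, -⟩, ht', -⟩ := hx
  simp only at ht ht' hpen ⊢
  have hdist : 0 ≤ sqDist Y Z + (t - t') ^ 2 := add_nonneg (sqDist_nonneg _ _) (sq_nonneg _)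
  have hpen' : β * (sqDist Y Z + (t - t') ^ 2) ≤ Real.exp (2 * K * t) * (4 * ε) :=
    hpen.trans (mul_le_mul_of_nonneg_left (by linarith) (Real.exp_pos _).le)
  have hclose : sqDist Y Z + (t - t') ^ 2 ≤ R ^ 2 := calc
    _ ≤ β * (sqDist Y Z + (t - t') ^ 2) := le_mul_of_one_le_left hdist hβ
    _ ≤ Real.exp (2 * K * t) * (4 * ε) := hpen'
    _ ≤ Real.exp (2 * K * T) * (4 * ε) := by gcongr; exacts [by linarith, ht.2]
    _ ≤ R ^ 2 := by linarith
  have hmax : Real.exp (2 * K * t) * θ ≤ doubled u v β β ((t, Y), t', Z) := by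
    have h := hnear ((t₁, Y₁), t₁, Y₁)
      ⟨⟨ht₁, trivial⟩, ⟨ht₁.1, by linarith [ht₁.2]⟩, trivial⟩
    simp only [discounted, doubled, sqDist, sub_self, norm_zero, ne_eq, OfNat.ofNat_ne_zero,
      not_false_eq_true, zero_pow, add_zero, mul_zero, sub_zero] at h
    rw [← le_inv_mul_iff₀ (Real.exp_pos _), ← Real.exp_neg]
    simp only [doubled, sqDist]
    linarith
  have hdiff : u t Y - v t' Z =
      doubled u v β β ((t, Y), t', Z) + β * (sqDist Y Z + (t - t') ^ 2) := by
    simp only [doubled]; ring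
  have hlow : Real.exp (2 * K * t) * θ ≤ C * (t + t') := calc
    _ ≤ u t Y - v t' Z := by rw [hdiff]; linarith [mul_nonneg (zero_le_one.trans hβ) hdist]
    _ ≤ C * (t + t') := hgrowth t ht.1 t' ht'.1 Y Z
  have htime : |t - t'| ≤ R := abs_le_of_sq_le_sq (by linarith [sqDist_nonneg Y Z]) hR
  obtain ⟨hint, hint'⟩ := mem_Ioo_of_exp_mul_le hK hC hθ hT hR1 hCR ht ht' htime hlow
  exact ⟨hint, hint', hclose, hmax, by linarith⟩

end NearMaxima

namespace IsCellSolution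

variable {N : ℕ} {s : ℝ} {g : EN N → ℝ} {W : ℝ → ℝ} {σ : ℝ → EN N → ℝ} {p : EN N}
  {L a₀ η A S K : ℝ} {U V : ℝ → EN N × ℝ → ℝ}

lemma exists_bound (hU : IsCellSolution N s g W σ p L a₀ η U)
    (hV : IsCellSolution N s g W σ p L a₀ η V) (T : ℝ) :
    ∃ H, (∀ t ∈ Icc 0 T, ∀ Y, |U t Y| ≤ H) ∧ ∀ t ∈ Icc 0 T, ∀ Y, |V t Y| ≤ H := by
  obtain ⟨H, hH⟩ := hU.bounded T
  obtain ⟨H', hH'⟩ := hV.bounded T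
  exact ⟨max H H', fun t ht Y => (hH t ht Y).trans (le_max_left _ _),
    fun t ht Y => (hH' t ht Y).trans (le_max_right _ _)⟩

lemma exists_sub_le_mul_add (hU : IsCellSolution N s g W σ p L a₀ η U)
    (hV : IsCellSolution N s g W σ p L a₀ η V) (hD : IsCellData N s g W σ A S K) (hη : 0 ≤ η)
    {M : ℝ} (hU0 : ∀ Y, U 0 Y ≤ M) (hV0 : ∀ Y, M ≤ V 0 Y) :
    ∃ C ≥ 0, ∀ t ≥ 0, ∀ t' ≥ 0, ∀ Y Z, U t Y - V t' Z ≤ C * (t + t') := by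
  refine ⟨|L + A + S + η * a₀| + |L - A - S + η * a₀|, by positivity, fun t ht t' ht' Y Z => ?_⟩
  have h := hU.le_linear hD hη hU0 ht Y
  have h' := hV.linear_le hD hη hV0 ht' Z
  nlinarith [mul_le_mul_of_nonneg_right (le_abs_self (L + A + S + η * a₀)) ht,
    mul_le_mul_of_nonneg_right (neg_abs_le (L - A - S + η * a₀)) ht',
    mul_nonneg (abs_nonneg (L + A + S + η * a₀)) ht',
    mul_nonneg (abs_nonneg (L - A - S + η * a₀)) ht]

lemma abs_add_iInf_sub_le (hU : IsCellSolution N s g W σ p L a₀ η U) {t H : ℝ} (ht : 0 ≤ t)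
    (hH : ∀ Y, |U t Y| ≤ H) (Y : EN N × ℝ) :
    |a₀ + (⨅ Y', U t Y') - U t Y| ≤ |a₀| + 2 * H := by
  have hlow : -H ≤ ⨅ Y', U t Y' := le_ciInf fun Y' => neg_le_of_abs_le (hH Y')
  have hinf := hU.iInf_le ht Y
  have hY := le_of_abs_le (hH Y)
  have ha := abs_le.1 (le_refl |a₀|)
  have hH0 : 0 ≤ H := (abs_nonneg _).trans (hH Y)
  rw [abs_le]
  constructor <;> linarith

end IsCellSolution

lemma exists_ge_mul_lt_exp_mul {K : ℝ} (hK : 1 ≤ K) (C t₁ : ℝ) {θ : ℝ} (hθ : 0 < θ) :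
    ∃ T ≥ t₁, C * (2 * T + 1) < Real.exp (2 * K * T) * θ := by
  obtain ⟨T, hT₁, hT0, hCT⟩ : ∃ T, t₁ ≤ T ∧ 0 ≤ T ∧ C / θ ≤ T :=
    ⟨max t₁ (max 0 (C / θ)), by simp⟩
  refine ⟨T, hT₁, ?_⟩
  rw [div_le_iff₀ hθ] at hCT
  calc C * (2 * T + 1) ≤ T * θ * (2 * T + 1) := by gcongr
    _ < (1 + 2 * T + (2 * T) ^ 2 / 2) * θ := by nlinarith
    _ ≤ Real.exp (2 * T) * θ := by
        gcongr; exact Real.quadratic_le_exp_of_nonneg (by positivity)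
    _ ≤ Real.exp (2 * K * T) * θ := by gcongr; linarith

lemma le_add_of_doubling_bounds {K E θ a ε d q : ℝ} (hK : 1 ≤ K) (hE : 1 ≤ E) (ha : 0 ≤ a)
    (hε : 0 ≤ ε) (hd : E * θ ≤ d) (hq : q ≤ d + E * (4 * ε))
    (h : 2 * K * d ≤ K * q + K * a + E * (3 * ε)) : θ ≤ a + 7 * ε := by
  have hK0 : 0 < K := zero_lt_one.trans_le hK
  have hE0 : 0 < E := zero_lt_one.trans_le hE
  refine le_of_mul_le_mul_left ?_ (mul_pos hK0 hE0)
  calc K * E * θ ≤ K * d := by rw [mul_assoc]; gcongr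
    _ ≤ K * E * (4 * ε) + K * a + E * (3 * ε) := by
      linarith [mul_le_mul_of_nonneg_left hq hK0.le]
    _ ≤ K * E * (4 * ε) + K * E * a + K * E * (3 * ε) := by
      gcongr
      · exact le_mul_of_one_le_right hK0.le hE
      · exact le_mul_of_one_le_left hE0.le hK
    _ = K * E * (a + 7 * ε) := by ring

namespace IsCellSolution

variable {N : ℕ} {s : ℝ} {g : EN N → ℝ} {W : ℝ → ℝ} {σ : ℝ → EN N → ℝ} {p : EN N}
  {L a₀ η A S K : ℝ} {U V : ℝ → EN N × ℝ → ℝ}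

/-- First `r` makes the singular part of the nonlocal terms harmless, then `δ` does so for the
perturbation that localises the maximum. -/
lemma exists_near_max_le (hU : IsCellSolution N s g W σ p L a₀ η U)
    (hV : IsCellSolution N s g W σ p L a₀ η V) (hD : IsCellData N s g W σ A S K) (hη : 0 ≤ η)
    {T β ε R : ℝ} (hT : 0 ≤ T) (hβ : 1 ≤ β) (hε : 0 < ε) (hR : 0 ≤ R)
    (hnear : ∀ δ, 0 ≤ δ → δ ≤ ε → ∀ x ∈ doubledDomain N T,
      (∀ y ∈ doubledDomain N T, discounted K U V β y ≤ discounted K U V β x + δ) →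
      x.1.1 ∈ Ioo 0 T ∧ x.2.1 ∈ Ioo 0 (T + 1) ∧
        sqDist x.1.2 x.2.2 + (x.1.1 - x.2.1) ^ 2 ≤ R ^ 2 ∧ V x.2.1 x.2.2 ≤ U x.1.1 x.1.2) :
    ∃ δ, 0 ≤ δ ∧ δ ≤ ε ∧ ∃ x ∈ doubledDomain N T,
      (∀ y ∈ doubledDomain N T, discounted K U V β y ≤ discounted K U V β x + δ) ∧
      2 * K * doubled U V β β x ≤ K * (U x.1.1 x.1.2 - V x.2.1 x.2.2) +
        K * ((‖p‖ + 3) * R) + Real.exp (2 * K * x.1.1) * (3 * ε) := by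
  have hK : 0 ≤ K := zero_le_one.trans hD.one_le
  obtain ⟨χ, B, hχ⟩ := exists_isBump (EN N × ℝ)
  obtain ⟨H, hUH, hVH⟩ := hU.exists_bound hV (T + 1)
  obtain ⟨r, hr, hr1, hmass⟩ := hD.kernel.exists_nearMass_le (ε := ε / β) (by positivity)
  rw [le_div_iff₀' (by positivity)] at hmass
  obtain ⟨δ, hδ, hδX⟩ := exists_pos_mul_lt hε (max 1 (B * nearMass N s g r + farMass N s g r +
    η * (2 * β * R + 1 + (|a₀| + 2 * H) * B)))
  obtain ⟨e, ⟨⟨t, Y⟩, t', Z⟩, hx, hmax, hxδ⟩ :=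
    exists_isMaxOn_discounted (u := U) (v := V) hχ hK hT hβ hU.continuousOn hV.continuousOn hUH hVH
      hδ
  have hδε : δ ≤ ε := (le_mul_of_one_le_left hδ.le (le_max_left _ _)).trans hδX.le
  obtain ⟨ht, ht', hclose, hle⟩ := hnear δ hδ.le hδε _ hx hxδ
  refine ⟨δ, hδ.le, hδε, _, hx, hxδ, ?_⟩
  simp only [sqDist] at ht ht' hclose hle ⊢
  have hdiv := hU.discounted_max_le hV hD hη hχ ht ht' (zero_le_one.trans hβ) hδ.le hr hr1
    (hU.abs_add_iInf_sub_le ht.1.le (hUH t ⟨ht.1.le, by linarith [ht.2]⟩) Y) hle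
    (le_of_sq_le_sq (by nlinarith) hR) (abs_le_of_sq_le_sq (by nlinarith) hR)
    (abs_le_of_sq_le_sq (by nlinarith) hR) hmax (increment_le_of_discounted_le hx hxδ)
  have hexp : 1 ≤ Real.exp (2 * K * t) := Real.one_le_exp (by have := ht.1; positivity)
  have herr := mul_le_mul_of_nonneg_left
    ((mul_le_mul_of_nonneg_right (le_max_right 1 _) hδ.le).trans hδX.le) (zero_le_one.trans hexp)
  linarith [le_mul_of_one_le_left hε.le hexp]

/-- At a near maximum of the doubled difference the zeroth-order term, doubled by the discount,
dominates the Lipschitz nonlinearity. -/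
theorem comparison (hU : IsCellSolution N s g W σ p L a₀ η U)
    (hV : IsCellSolution N s g W σ p L a₀ η V) (hD : IsCellData N s g W σ A S K) (hη : 0 ≤ η)
    {M : ℝ} (hU0 : ∀ Y, U 0 Y ≤ M) (hV0 : ∀ Y, M ≤ V 0 Y) {t₁ : ℝ} (ht₁ : 0 ≤ t₁)
    (Y₁ : EN N × ℝ) : U t₁ Y₁ ≤ V t₁ Y₁ := by
  by_contra! hlt
  have hK1 : 1 ≤ K := hD.one_le
  have hK : 0 ≤ K := zero_le_one.trans hK1
  obtain ⟨θ, hθ, hgap⟩ : ∃ θ > 0, 2 * θ = Real.exp (-(2 * K * t₁)) * (U t₁ Y₁ - V t₁ Y₁) :=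
    ⟨Real.exp (-(2 * K * t₁)) * (U t₁ Y₁ - V t₁ Y₁) / 2,
      half_pos (mul_pos (Real.exp_pos _) (sub_pos.2 hlt)), by ring⟩
  obtain ⟨C, hC, hgrowth⟩ := hU.exists_sub_le_mul_add hV hD hη hU0 hV0
  obtain ⟨T, hT₁, hT⟩ := exists_ge_mul_lt_exp_mul hK1 C t₁ hθ
  have hT0 : 0 ≤ T := ht₁.trans hT₁
  obtain ⟨R, hR, hRlt⟩ := exists_pos_mul_lt (lt_min one_pos (by positivity : 0 < θ / 8))
    (C + ‖p‖ + 3 + 1)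
  obtain ⟨hR1, hRθ⟩ := lt_min_iff.1 hRlt
  have hCR : 0 ≤ C * R := by positivity
  have hpR : 0 ≤ ‖p‖ * R := by positivity
  obtain ⟨ε, hε, hεlt⟩ := exists_pos_mul_lt (lt_min (by positivity : 0 < θ / 16) (pow_pos hR 2))
    (4 * Real.exp (2 * K * T) + 1)
  obtain ⟨hεθ, hεR⟩ := lt_min_iff.1 hεlt
  have hEε : 0 ≤ Real.exp (2 * K * T) * ε := by positivity
  obtain ⟨H, hUH, hVH⟩ := hU.exists_bound hV (T + 1)
  obtain ⟨β, hβ, hpen⟩ := exists_discounted_penalization_le (K := K) hK hT0 hUH hVH hε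
  have hint := fun δ (hδ : 0 ≤ δ) (hδε : δ ≤ ε) x hx hxδ =>
    interior_of_near_max (u := U) (v := V) hK hC hgrowth hθ ⟨ht₁, hT₁⟩ hgap.le hT hR.le
      (by linarith) (by linarith) hβ (by linarith) (by linarith) hδ hδε hx hxδ (hpen δ x hx hxδ)
  obtain ⟨δ, hδ, hδε, x, hx, hxδ, hle⟩ := hU.exists_near_max_le hV hD hη hT0 hβ hε hR.le
    fun δ hδ hδε x hx hxδ => by
      obtain ⟨ht, ht', hclose, hlow, -⟩ := hint δ hδ hδε x hx hxδ
      have hE : 0 ≤ Real.exp (2 * K * x.1.1) * θ := by positivity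
      have hsub := doubled_le_sub (u := U) (v := V) (zero_le_one.trans hβ) (zero_le_one.trans hβ) x
      exact ⟨ht, ht', hclose, by linarith⟩
  obtain ⟨ht, -, -, hlow, hup⟩ := hint δ hδ hδε x hx hxδ
  have hE : 1 ≤ Real.exp (2 * K * x.1.1) := Real.one_le_exp (by have := ht.1; positivity)
  linarith [le_add_of_doubling_bounds hK1 hE (by positivity) hε.le hlow hup hle]

end IsCellSolution

/-! ### Periodicity -/

namespace IsCellSolution

variable {N : ℕ} {s : ℝ} {g : EN N → ℝ} {W : ℝ → ℝ} {σ : ℝ → EN N → ℝ} {p : EN N}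
  {L a₀ η A S K : ℝ} {U : ℝ → EN N × ℝ → ℝ}

lemma apply_add_latticePoint (hU : IsCellSolution N s g W σ p L a₀ η U)
    (hD : IsCellData N s g W σ A S K) (hη : 0 ≤ η) (h0 : ∀ Y, U 0 Y = 0) (k : Fin N → ℤ) (j : ℤ)
    {t : ℝ} (ht : 0 ≤ t) (Y : EN N × ℝ) :
    U t (Y + (latticePoint k, j - ⟪p, latticePoint k⟫)) = U t Y := by
  have hV := hU.translate le_rfl (m := (latticePoint k, j - ⟪p, latticePoint k⟫)) (c := 0)
    (fun t y => by simpa using hD.periodic_forcing 0 k t y)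
    (by simpa using hD.periodic_deriv.int_mul j)
  simp only [add_zero] at hV
  exact le_antisymm (hV.comparison hU hD hη (M := 0) (fun _ => (h0 _).le) (fun _ => (h0 _).ge) ht Y)
    (hU.comparison hV hD hη (M := 0) (fun _ => (h0 _).le) (fun _ => (h0 _).ge) ht Y)

/-- A solution shifted by `h` in `y_{N+1}` and raised by `h` is again a solution. -/
lemma le_add_of_le (hU : IsCellSolution N s g W σ p L a₀ η U) (hD : IsCellData N s g W σ A S K)
    (hη : 0 ≤ η) (h0 : ∀ Y, U 0 Y = 0) {t : ℝ} (ht : 0 ≤ t) (y : EN N) {a b : ℝ} (hab : a ≤ b) :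
    U t (y, a) ≤ U t (y, b) + (b - a) := by
  have hV := hU.translate le_rfl (m := (0, b - a)) (c := b - a) (by simp) (by simp)
  simpa using hU.comparison hV hD hη (fun Y => (h0 Y).le) (fun Y => by simp [h0, hab]) ht (y, a)

lemma le_add_one (hU : IsCellSolution N s g W σ p L a₀ η U) (hD : IsCellData N s g W σ A S K)
    (hη : 0 ≤ η) (h0 : ∀ Y, U 0 Y = 0) {t : ℝ} (ht : 0 ≤ t) (y : EN N) (a b : ℝ) :
    U t (y, a) ≤ U t (y, b) + 1 := by
  have hper := hU.apply_add_latticePoint hD hη h0 0 ⌈a - b⌉ ht (y, b)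
  have hmono := hU.le_add_of_le hD hη h0 ht y (a := a) (b := b + ⌈a - b⌉)
    (by linarith [Int.le_ceil (a - b)])
  have hzero : latticePoint (0 : Fin N → ℤ) = 0 := by simp [latticePoint, ← Pi.zero_def]
  simp only [hzero, inner_zero_right, sub_zero, Prod.mk_add_mk, add_zero] at hper
  linarith [Int.ceil_lt_add_one (a - b)]

lemma exists_mem_cell (hU : IsCellSolution N s g W σ p L a₀ η U)
    (hD : IsCellData N s g W σ A S K) (hη : 0 ≤ η) (h0 : ∀ Y, U 0 Y = 0) (c : EN N)
    (Y : EN N × ℝ) : ∃ Z ∈ closedBall c √N ×ˢ Icc (0 : ℝ) 1, ∀ t ≥ 0, U t Z = U t Y := by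
  obtain ⟨k, hk⟩ := exists_norm_add_latticePoint_sub_le Y.1 c
  refine ⟨(Y.1 + latticePoint k, Int.fract (Y.2 - ⟪p, latticePoint k⟫)),
    ⟨mem_closedBall_iff_norm.2 hk, Int.fract_nonneg _, (Int.fract_lt_one _).le⟩, fun t ht => ?_⟩
  rw [← hU.apply_add_latticePoint hD hη h0 k (-⌊Y.2 - ⟪p, latticePoint k⟫⌋) ht Y]
  congr 1
  ext1
  · rfl
  · simp only [Int.fract, Prod.snd_add, Int.cast_neg]
    ring

lemma exists_abs_sub_lt (hU : IsCellSolution N s g W σ p L a₀ η U)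
    (hD : IsCellData N s g W σ A S K) (hη : 0 ≤ η) (h0 : ∀ Y, U 0 Y = 0) (T : ℝ) {ε : ℝ}
    (hε : 0 < ε) :
    ∃ d > 0, ∀ t ∈ Icc 0 T, ∀ t' ∈ Icc 0 T, |t - t'| < d → ∀ Y, |U t Y - U t' Y| < ε := by
  have hcompact : IsCompact (Icc 0 T ×ˢ (closedBall (0 : EN N) √N ×ˢ Icc (0 : ℝ) 1)) :=
    isCompact_Icc.prod ((isCompact_closedBall _ _).prod isCompact_Icc)
  obtain ⟨d, hd, huc⟩ := Metric.uniformContinuousOn_iff.1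
    (hcompact.uniformContinuousOn_of_continuous
      (hU.continuousOn.mono (prod_mono Icc_subset_Ici_self (subset_univ _)))) ε hε
  refine ⟨d, hd, fun t ht t' ht' htt Y => ?_⟩
  obtain ⟨Z, hZ, hZY⟩ := hU.exists_mem_cell hD hη h0 0 Y
  rw [← hZY t ht.1, ← hZY t' ht'.1]
  exact huc (t, Z) ⟨ht, hZ⟩ (t', Z) ⟨ht', hZ⟩ (by simpa [Prod.dist_eq, Real.dist_eq, hd] using htt)

end IsCellSolution

/-! ### Oscillation -/

namespace IsCellSolution

variable {N : ℕ} {s : ℝ} {g : EN N → ℝ} {W : ℝ → ℝ} {σ : ℝ → EN N → ℝ} {p : EN N}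
  {L a₀ η A S K : ℝ} {U : ℝ → EN N × ℝ → ℝ}

/-- Without penalisation in space `Z` minimises `U(t', ·)`, which makes the `η`-terms cancel. -/
lemma levyI2_lt_of_isMaxOn (hU : IsCellSolution N s g W σ p L a₀ η U)
    (hD : IsCellData N s g W σ A S K) (hη : 0 ≤ η) {α : ℝ → ℝ} {α' t t' T β : ℝ}
    (hα : ContDiff ℝ 2 α) (hα' : HasDerivAt α α' t) (hpos : 0 < α') (ht : t ∈ Ioo 0 T)
    (ht' : t' ∈ Ioo 0 (T + 1)) {Y Z : EN N × ℝ}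
    (hmax : IsMaxOn (fun x => doubled U U 0 β x - α x.1.1) (doubledDomain N T) ((t, Y), t', Z)) :
    levyI2 N s g (fun y => U t' (y, Z.2)) 1 Z.1 <
      levyI2 N s g (fun y => U t (y, Y.2)) 1 Y.1 + 2 * (A + S) := by
  obtain ⟨χ, B, hχ⟩ := exists_isBump (EN N × ℝ)
  obtain ⟨ω, I, J, -, hI, hJ, h⟩ := hU.subsolution.doubling hU.supersolution hD.kernel hχ
    (ρ := fun _ => 0) (b := 0) (e := 0) hα contDiff_const hα' (hasDerivAt_const t 0) one_pos le_rfl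
    ht ht' (by simpa only [zero_mul, sub_zero] using hmax)
  have hZ : ∀ Z', U t' Z ≤ U t' Z' := fun Z' => by
    have hle := hmax (mk_mem_prod (mk_mem_prod (Ioo_subset_Icc_self ht) (mem_univ Y))
      (mk_mem_prod (Ioo_subset_Icc_self ht') (mem_univ Z')))
    simp only [mem_ofPred_eq, doubled, zero_mul] at hle
    linarith
  have hηY : η * (a₀ + (⨅ Y', U t Y') - U t Y) ≤ η * a₀ :=
    mul_le_mul_of_nonneg_left (by linarith [hU.iInf_le ht.1.le Y]) hη
  have hηZ : η * a₀ ≤ η * (a₀ + (⨅ Y', U t' Y') - U t' Z) :=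
    mul_le_mul_of_nonneg_left (by linarith [le_ciInf hZ]) hη
  have hWY := neg_le_of_abs_le (hD.abs_deriv_le (U t Y + ⟪p, Y.1⟫ + Y.2))
  have hWZ := le_of_abs_le (hD.abs_deriv_le (U t' Z + ⟪p, Z.1⟫ + Z.2))
  have hσY := le_of_abs_le (hD.abs_forcing_le t Y.1 ht.1.le)
  have hσZ := neg_le_of_abs_le (hD.abs_forcing_le t' Z.1 ht'.1.le)
  simp only [cellRHS, abs_zero, zero_mul, mul_zero, add_zero, zero_add, sub_zero, abs_one, mul_one]
    at hI hJ h
  linarith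

lemma exists_isMaxOn_doubled (hU : IsCellSolution N s g W σ p L a₀ η U)
    (hD : IsCellData N s g W σ A S K) (hη : 0 ≤ η) (h0 : ∀ Y, U 0 Y = 0) {α : ℝ → ℝ}
    (hα : Continuous α) (β : ℝ) {T : ℝ} (hT : 0 ≤ T) :
    ∃ t ∈ Icc 0 T, ∃ t' ∈ Icc 0 (T + 1), ∃ Y Z : EN N × ℝ, ‖Z.1 - Y.1‖ ≤ √N ∧
      IsMaxOn (fun x => doubled U U 0 β x - α x.1.1) (doubledDomain N T) ((t, Y), t', Z) := by
  set cell : Set (EN N × ℝ) := closedBall 0 √N ×ˢ Icc 0 1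
  have hcell : IsCompact cell := (isCompact_closedBall _ _).prod isCompact_Icc
  have hzero : (0 : EN N × ℝ) ∈ cell := ⟨by simp, by simp⟩
  have hcont : ContinuousOn (fun x => doubled U U 0 β x - α x.1.1)
      ((Icc 0 T ×ˢ cell) ×ˢ (Icc 0 (T + 1) ×ˢ cell)) :=
    ((continuousOn_doubled hU.continuousOn hU.continuousOn 0 β).mono
      (prod_mono (prod_mono_right (subset_univ _)) (prod_mono_right (subset_univ _)))).sub
      (by fun_prop : Continuous fun x : (ℝ × EN N × ℝ) × ℝ × EN N × ℝ => α x.1.1).continuousOn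
  obtain ⟨⟨⟨t, Y⟩, t', Z₀⟩, ⟨⟨ht, -⟩, ht', -⟩, hmax⟩ :=
    ((isCompact_Icc.prod hcell).prod (isCompact_Icc.prod hcell)).exists_isMaxOn
      ⟨((0, 0), 0, 0), ⟨⟨le_rfl, hT⟩, hzero⟩, ⟨le_rfl, by linarith⟩, hzero⟩ hcont
  obtain ⟨Z, ⟨hZ, -⟩, hZU⟩ := hU.exists_mem_cell hD hη h0 Y.1 Z₀
  refine ⟨t, ht, t', ht', Y, Z, mem_closedBall_iff_norm.1 hZ, ?_⟩
  rintro ⟨⟨τ, Y'⟩, τ', Z'⟩ ⟨⟨hτ, -⟩, hτ', -⟩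
  obtain ⟨Y₂, hY₂, hYU⟩ := hU.exists_mem_cell hD hη h0 0 Y'
  obtain ⟨Z₂, hZ₂, hZU'⟩ := hU.exists_mem_cell hD hη h0 0 Z'
  have hle := hmax (mk_mem_prod (mk_mem_prod hτ hY₂) (mk_mem_prod hτ' hZ₂))
  simpa only [mem_ofPred_eq, doubled, zero_mul, hYU τ hτ.1, hZU' τ' hτ'.1, hZU t' ht'.1] using hle

lemma interior_of_isMaxOn {C H R t₁ ν Q a β : ℝ} {Y₁ Z₁ : EN N × ℝ}
    {x : (ℝ × EN N × ℝ) × ℝ × EN N × ℝ} (hC : 0 ≤ C)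
    (hgrowth : ∀ t ≥ 0, ∀ t' ≥ 0, ∀ Y Z, U t Y - U t' Z ≤ C * (t + t'))
    (hH : ∀ t ∈ Icc 0 (t₁ + 1 + 1), ∀ Y, |U t Y| ≤ H) (ht₁ : 0 ≤ t₁) (hQ : 0 ≤ Q) (hν : 0 < ν)
    (hgap : Q + 2 * ν ≤ U t₁ Y₁ - U t₁ Z₁) (ha : 2 * H < ν * Real.exp a) (hR : 0 ≤ R) (hR1 : R < 1)
    (hCR : C * R < ν) (hβ : 2 * H ≤ β * R ^ 2) (hβ0 : 0 < β) (hx : x ∈ doubledDomain N (t₁ + 1))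
    (hmax : IsMaxOn (fun x => doubled U U 0 β x - ν * Real.exp (a * (x.1.1 - t₁)))
      (doubledDomain N (t₁ + 1)) x) :
    x.1.1 ∈ Ioo 0 (t₁ + 1) ∧ x.2.1 ∈ Ioo 0 (t₁ + 1 + 1) ∧ |x.1.1 - x.2.1| ≤ R ∧
      Q + ν ≤ U x.1.1 x.1.2 - U x.2.1 x.2.2 := by
  obtain ⟨⟨⟨t, Y⟩, t', Z⟩, rfl⟩ : ∃ z, z = x := ⟨x, rfl⟩
  obtain ⟨⟨ht, -⟩, ht', -⟩ := hx
  simp only at ht ht' ⊢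
  have hval : Q + ν + β * (t - t') ^ 2 + ν * Real.exp (a * (t - t₁)) ≤ U t Y - U t' Z := by
    have hle := hmax (mk_mem_prod (mk_mem_prod (⟨ht₁, by linarith⟩ : t₁ ∈ Icc 0 (t₁ + 1))
      (mem_univ Y₁)) (mk_mem_prod (⟨ht₁, by linarith⟩ : t₁ ∈ Icc 0 (t₁ + 1 + 1)) (mem_univ Z₁)))
    simp only [mem_ofPred_eq, doubled, zero_mul, sub_self, mul_zero, Real.exp_zero] at hle
    linarith
  have hexp : 0 ≤ ν * Real.exp (a * (t - t₁)) := by positivity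
  have hsq : 0 ≤ β * (t - t') ^ 2 := by positivity
  have hUH : U t Y - U t' Z ≤ 2 * H := by
    linarith [le_of_abs_le (hH t ⟨ht.1, by linarith [ht.2]⟩ Y), neg_le_of_abs_le (hH t' ht' Z)]
  have htime : |t - t'| ≤ R :=
    abs_le_of_sq_le_sq (le_of_mul_le_mul_left (by linarith) hβ0) hR
  have hsum : R < t + t' := lt_of_not_ge fun hle => by
    linarith [mul_le_mul_of_nonneg_left hle hC, hgrowth t ht.1 t' ht'.1 Y Z]
  obtain ⟨hint, hint'⟩ := mem_Ioo_of_abs_sub_lt_add ht (htime.trans_lt hR1) (htime.trans_lt hsum)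
    fun h => by
      subst h
      rw [add_sub_cancel_left, mul_one] at hval
      linarith
  exact ⟨hint, hint', htime, by linarith⟩

/-- The time weight and the penalisation of `t - t'` cost less than `ν` in total; the former places
the times in the interior and has positive derivative, the latter makes them nearly equal. -/
lemma exists_extrema (hU : IsCellSolution N s g W σ p L a₀ η U)
    (hD : IsCellData N s g W σ A S K) (hη : 0 ≤ η) (h0 : ∀ Y, U 0 Y = 0) {t₁ : ℝ} (ht₁ : 0 ≤ t₁)
    {Y₁ Z₁ : EN N × ℝ} {Q ν : ℝ} (hQ : 0 ≤ Q) (hν : 0 < ν)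
    (hgap : Q + 2 * ν ≤ U t₁ Y₁ - U t₁ Z₁) :
    ∃ t ≥ 0, ∃ t' ≥ 0, ∃ Y Z : EN N × ℝ, ‖Z.1 - Y.1‖ ≤ √N ∧
      (∀ Y', U t Y' ≤ U t Y) ∧ (∀ Z', U t' Z ≤ U t' Z') ∧ (∀ X, |U t X - U t' X| < ν / 2) ∧
      Q + ν ≤ U t Y - U t' Z ∧
      levyI2 N s g (fun y => U t' (y, Z.2)) 1 Z.1 <
        levyI2 N s g (fun y => U t (y, Y.2)) 1 Y.1 + 2 * (A + S) := by
  obtain ⟨C, hC, hgrowth⟩ :=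
    hU.exists_sub_le_mul_add hU hD hη (fun Y => (h0 Y).le) (fun Y => (h0 Y).ge)
  obtain ⟨H, hH⟩ := hU.bounded (t₁ + 1 + 1)
  obtain ⟨a, haH, ha⟩ := (((Real.tendsto_exp_atTop.const_mul_atTop hν).eventually_gt_atTop
    (2 * H)).and (eventually_gt_atTop 0)).exists
  obtain ⟨d, hd, hmod⟩ := hU.exists_abs_sub_lt hD hη h0 (t₁ + 1 + 1) (half_pos hν)
  obtain ⟨R, hR, hRlt⟩ := exists_pos_mul_lt (lt_min one_pos (lt_min hd hν)) (C + 1)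
  simp only [lt_min_iff] at hRlt
  obtain ⟨hR1, hRd, hRν⟩ := hRlt
  have hCR : 0 ≤ C * R := by positivity
  obtain ⟨β, hβH, hβ⟩ := (((tendsto_id.atTop_mul_const (pow_pos hR 2)).eventually_ge_atTop
    (2 * H)).and (eventually_gt_atTop 0)).exists
  obtain ⟨t, ht, t', ht', Y, Z, hYZ, hmax⟩ := hU.exists_isMaxOn_doubled hD hη h0
    (α := fun τ => ν * Real.exp (a * (τ - t₁))) (by fun_prop) β (by positivity : 0 ≤ t₁ + 1)
  obtain ⟨hint, hint', htime, hval⟩ := interior_of_isMaxOn hC hgrowth hH ht₁ hQ hν hgap haH hR.le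
    (by linarith) (by linarith) hβH hβ ⟨⟨ht, trivial⟩, ht', trivial⟩ hmax
  have hle := fun Y' Z' => hmax (mk_mem_prod (mk_mem_prod ht (mem_univ Y'))
    (mk_mem_prod ht' (mem_univ Z')))
  simp only [mem_ofPred_eq, doubled, zero_mul] at hle
  have hα' : HasDerivAt (fun τ => ν * Real.exp (a * (τ - t₁)))
      (ν * (Real.exp (a * (t - t₁)) * (a * 1))) t :=
    ((((hasDerivAt_id t).sub_const t₁).const_mul a).exp).const_mul ν
  exact ⟨t, ht.1, t', ht'.1, Y, Z, hYZ, fun Y' => by linarith [hle Y' Z],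
    fun Z' => by linarith [hle Y Z'],
    hmod t ⟨ht.1, by linarith [ht.2]⟩ t' ht' (by linarith), hval,
    hU.levyI2_lt_of_isMaxOn hD hη (by fun_prop) hα' (by positivity) hint hint' hmax⟩

end IsCellSolution

lemma exists_norm_eq_add_three {N : ℕ} (hN : 1 ≤ N) : ∃ w : EN N, ‖w‖ = √N + 3 := by
  refine ⟨(√N + 3) • EuclideanSpace.single ⟨0, hN⟩ 1, ?_⟩
  rw [norm_smul, Real.norm_of_nonneg (by positivity)]
  simp

/-- Bound on the oscillation in space of solutions whose kernel is at least `κ` where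
`1 ≤ ‖z‖ ≤ 2 √N + 4` and whose data `W'` and `σ` are bounded by `c` in total. -/
noncomputable def oscBound (N : ℕ) (κ c : ℝ) : ℝ :=
  1 + 2 * c / (κ * volume.real (ball (0 : EN N) 1))

namespace IsCellSolution

variable {N : ℕ} {s : ℝ} {g : EN N → ℝ} {W : ℝ → ℝ} {σ : ℝ → EN N → ℝ} {p : EN N}
  {L a₀ η A S K : ℝ} {U : ℝ → EN N × ℝ → ℝ}

/-- With a larger oscillation, the nonlocal terms at the extrema would outweigh the bounded terms
of the equation. -/
theorem le_add_oscBound (hU : IsCellSolution N s g W σ p L a₀ η U)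
    (hD : IsCellData N s g W σ A S K) (hη : 0 ≤ η) (h0 : ∀ Y, U 0 Y = 0) (hN : 1 ≤ N) {κ : ℝ}
    (hκ0 : 0 < κ) (hκ : ∀ z : EN N, 1 ≤ ‖z‖ → ‖z‖ ≤ 2 * √N + 4 → κ ≤ levyKernel N s g z)
    {t : ℝ} (ht : 0 ≤ t) (Y Z : EN N × ℝ) : U t Y ≤ U t Z + oscBound N κ (A + S) := by
  by_contra! hlt
  have hAS : 0 ≤ A + S := hD.bound_nonneg
  set V := volume.real (ball (0 : EN N) 1) with hV
  have hV0 : 0 < V := ENNReal.toReal_pos (measure_ball_pos _ _ one_pos).ne' measure_ball_lt_top.ne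
  obtain ⟨ν, hν, hgap⟩ : ∃ ν > 0, oscBound N κ (A + S) + 2 * ν = U t Y - U t Z :=
    ⟨(U t Y - U t Z - oscBound N κ (A + S)) / 2, by linarith, by ring⟩
  obtain ⟨τ, hτ, τ', hτ', Y', Z', hYZ, hmax, hmin, hmod, hval, hlevy⟩ :=
    hU.exists_extrema hD hη h0 ht (by unfold oscBound; positivity) hν hgap.le
  obtain ⟨M, hM⟩ := hU.bounded_slice hτ
  obtain ⟨M', hM'⟩ := hU.bounded_slice hτ'
  obtain ⟨w, hw⟩ := exists_norm_eq_add_three hN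
  have hsqrt : 0 ≤ √(N : ℝ) := Real.sqrt_nonneg _
  have hwY : ‖Y'.1 + w - Y'.1‖ = √N + 3 := by rw [add_sub_cancel_left, hw]
  have hwZ : Y'.1 + w - Z'.1 = w - (Z'.1 - Y'.1) := by abel
  have hlow := norm_sub_norm_le w (Z'.1 - Y'.1)
  have hup := norm_sub_le w (Z'.1 - Y'.1)
  rw [← hwZ, hw] at hlow hup
  have hle := hD.kernel.levyI2_sub_levyI2_le hκ0.le hκ (u := fun y => U τ (y, Y'.2))
    (v := fun y => U τ' (y, Z'.2)) (x := Y'.1) (x' := Z'.1) (c := Y'.1 + w)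
    (q := 2 * (A + S) / (κ * V) + ν / 2)
    ((hU.continuous_slice hτ).comp (by fun_prop)) ((hU.continuous_slice hτ').comp (by fun_prop))
    (fun y => hM _) (fun y => hM' _) (fun y => hmax _) (fun y => hmin _) (by linarith)
    (by linarith) (by linarith) (by linarith) fun y => by
      have hyn := hU.le_add_one hD hη h0 hτ y Y'.2 Z'.2
      have htime := le_of_abs_le (hmod (y, Z'.2)).le
      rw [oscBound, ← hV] at hval
      linarith
  rw [measureReal_def, Measure.addHaar_ball_center, ← measureReal_def, ← hV, ← mul_assoc, mul_add,
    mul_div_cancel₀ _ (by positivity : κ * V ≠ 0)] at hle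
  linarith [(by positivity : 0 < κ * V * (ν / 2))]

end IsCellSolution

/-! ### The ergodic constant -/

/-- Fekete's lemma for `b + D`. -/
lemma exists_tendsto_div_of_le_add {b : ℕ → ℝ} {c D : ℝ} (hb : ∀ j k, b (j + k) ≤ b j + b k + D)
    (hc : ∀ k : ℕ, c * k ≤ b k) :
    ∃ lam ≥ c, Tendsto (fun n => b n / n) atTop (nhds lam) ∧ ∀ k : ℕ, lam * k ≤ b k + D := by
  have hsub : Subadditive (fun n => b n + D) := fun j k => by linarith [hb j k]
  have hbdd : BddBelow (range fun n : ℕ => (b n + D) / n) := by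
    refine ⟨-(|c| + |D|), forall_mem_range.2 fun n => ?_⟩
    rcases n.eq_zero_or_pos with rfl | hn
    · simp only [CharP.cast_eq_zero, div_zero, Left.neg_nonpos_iff]
      positivity
    · have hn1 : (1 : ℝ) ≤ n := by exact_mod_cast hn
      rw [le_div_iff₀ (by positivity)]
      nlinarith [hc n, neg_abs_le c, neg_abs_le D, abs_nonneg D]
  have hlim : Tendsto (fun n => b n / n) atTop (nhds hsub.lim) := by
    simpa [add_div] using
      (hsub.tendsto_lim hbdd).sub (tendsto_const_div_atTop_nhds_zero_nat D)
  refine ⟨hsub.lim, ge_of_tendsto hlim ?_, hlim, fun k => ?_⟩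
  · filter_upwards [eventually_gt_atTop 0] with n hn
    exact (le_div_iff₀ (Nat.cast_pos.2 hn)).2 (hc n)
  · rcases k.eq_zero_or_pos with rfl | hk
    · have h := hb 0 0
      simp only [add_zero] at h
      simp only [CharP.cast_eq_zero, mul_zero]
      linarith
    · exact (le_div_iff₀ (Nat.cast_pos.2 hk)).1 (hsub.lim_le_div hbdd hk.ne')

lemma exists_abs_sub_mul_le {b : ℕ → ℝ} {c₁ c₂ D : ℝ}
    (hb : ∀ j k, |b (j + k) - (b j + b k)| ≤ D) (hc₁ : ∀ k : ℕ, c₁ * k ≤ b k)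
    (hc₂ : ∀ k : ℕ, b k ≤ c₂ * k) :
    ∃ lam ∈ Icc c₁ c₂, ∀ k : ℕ, |b k - lam * k| ≤ D := by
  obtain ⟨lam, hlam, hlim, hle⟩ := exists_tendsto_div_of_le_add (b := b) (D := D)
    (fun j k => by linarith [le_of_abs_le (hb j k)]) hc₁
  obtain ⟨lam', hlam', hlim', hle'⟩ := exists_tendsto_div_of_le_add (b := fun n => -b n) (D := D)
    (c := -c₂) (fun j k => by linarith [neg_le_of_abs_le (hb j k)]) fun k => by linarith [hc₂ k]
  obtain rfl : lam' = -lam :=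
    tendsto_nhds_unique hlim' (by simpa only [neg_div] using hlim.neg)
  exact ⟨lam, ⟨hlam, neg_le_neg_iff.1 hlam'⟩, fun k =>
    abs_le.2 ⟨by linarith [hle k], by linarith [hle' k]⟩⟩

lemma eq_of_abs_sub_mul_le {f : ℝ → ℝ} {lam lam' C : ℝ} (h : ∀ t > 0, |f t - lam * t| ≤ C)
    (h' : ∀ t > 0, |f t - lam' * t| ≤ C) : lam' = lam := by
  by_contra hne
  have hlim : Tendsto (fun t : ℝ => t * |lam' - lam|) atTop atTop :=
    tendsto_id.atTop_mul_const (abs_pos.2 (sub_ne_zero.2 hne))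
  obtain ⟨t, htC, ht⟩ := ((hlim.eventually_gt_atTop (2 * C)).and (eventually_gt_atTop 0)).exists
  have habs : t * |lam' - lam| ≤ |f t - lam * t| + |f t - lam' * t| := calc
    t * |lam' - lam| = |lam' * t - lam * t| := by rw [← sub_mul, abs_mul, abs_of_pos ht, mul_comm]
    _ ≤ |lam' * t - f t| + |f t - lam * t| := abs_sub_le _ _ _
    _ = _ := by rw [abs_sub_comm, add_comm]
  linarith [h t ht, h' t ht]

namespace IsCellSolution

variable {N : ℕ} {s : ℝ} {g : EN N → ℝ} {W : ℝ → ℝ} {σ : ℝ → EN N → ℝ} {p : EN N}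
  {L a₀ η A S K : ℝ} {U : ℝ → EN N × ℝ → ℝ}

lemma shift (hU : IsCellSolution N s g W σ p L a₀ η U) (hD : IsCellData N s g W σ A S K) (k : ℕ)
    (i : ℤ) : IsCellSolution N s g W σ p L a₀ η (fun t Y => U (t + k) Y + i) := by
  have hzero : latticePoint (0 : Fin N → ℤ) = 0 := by simp [latticePoint, ← Pi.zero_def]
  have h := hU.translate (k := k) (m := 0) (c := i) k.cast_nonneg
    (fun t y => by simpa [hzero] using hD.periodic_forcing k 0 t y)
    (by simpa using hD.periodic_deriv.int_mul (-i))
  simpa only [add_zero] using h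

/-- `U(· + j, ·)`, moved by an integer, lies below or above `U` at time `0`, hence always. -/
lemma abs_sub_add_le (hU : IsCellSolution N s g W σ p L a₀ η U) (hD : IsCellData N s g W σ A S K)
    (hη : 0 ≤ η) (h0 : ∀ Y, U 0 Y = 0) {Q : ℝ} (hQ : ∀ t ≥ 0, ∀ Y Z, U t Y ≤ U t Z + Q)
    (j k : ℕ) (Y : EN N × ℝ) : |U ↑(j + k) Y - (U j Y + U k Y)| ≤ Q + 1 := by
  have hup := (hU.shift hD j ⌊-(U j Y + Q)⌋).comparison hU hD hη (M := 0)
    (fun Z => by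
      rw [zero_add]
      linarith [hQ j j.cast_nonneg Z Y, Int.floor_le (-(U j Y + Q))])
    (fun Z => (h0 Z).ge) k.cast_nonneg Y
  have hlow := hU.comparison (hU.shift hD j ⌈-(U j Y - Q)⌉) hD hη (M := 0)
    (fun Z => (h0 Z).le)
    (fun Z => by
      rw [zero_add]
      linarith [hQ j j.cast_nonneg Y Z, Int.le_ceil (-(U j Y - Q))]) k.cast_nonneg Y
  rw [Nat.cast_add, add_comm (j : ℝ), abs_le]
  constructor
  · linarith [Int.ceil_lt_add_one (-(U j Y - Q))]
  · linarith [Int.lt_floor_add_one (-(U j Y + Q))]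

/-- Almost additivity gives the slope along integer times, and the linear barriers issued from the
last integer time cover the times in between. -/
theorem exists_slope (hU : IsCellSolution N s g W σ p L a₀ η U) (hD : IsCellData N s g W σ A S K)
    (hη : 0 ≤ η) (h0 : ∀ Y, U 0 Y = 0) {Q : ℝ} (hQ : ∀ t ≥ 0, ∀ Y Z, U t Y ≤ U t Z + Q) :
    ∃ lam ∈ Icc (L - A - S + η * a₀) (L + A + S + η * a₀),
      ∀ t ≥ 0, ∀ Y, |U t Y - lam * t| ≤ 2 * Q + 1 + 2 * (A + S) := by
  obtain ⟨lam, ⟨hlow, hup⟩, hlam⟩ := exists_abs_sub_mul_le (b := fun k : ℕ => U k 0)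
    (fun j k => hU.abs_sub_add_le hD hη h0 hQ j k 0)
    (fun k => by simpa using hU.linear_le hD hη (fun Y => (h0 Y).ge) k.cast_nonneg 0)
    (fun k => by simpa using hU.le_linear hD hη (fun Y => (h0 Y).le) k.cast_nonneg 0)
  refine ⟨lam, ⟨hlow, hup⟩, fun t ht Y => ?_⟩
  set k := ⌊t⌋₊
  have hr : 0 ≤ t - k := sub_nonneg.2 (Nat.floor_le ht)
  have hr1 : t - k ≤ 1 := by linarith [Nat.lt_floor_add_one t]
  have hV := hU.shift hD k 0
  have hVup := hV.le_linear hD hη (M := U k 0 + Q)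
    (fun Z => by simpa using hQ k k.cast_nonneg Z 0) hr Y
  have hVlow := hV.linear_le hD hη (M := U k 0 - Q)
    (fun Z => by simpa using hQ k k.cast_nonneg 0 Z) hr Y
  simp only [sub_add_cancel, Int.cast_zero, add_zero] at hVup hVlow
  have hk := abs_le.1 (hlam k)
  have herr := mul_le_mul_of_nonneg_left hr1 (sub_nonneg.2 hup)
  have herr' := mul_le_mul_of_nonneg_left hr1 (sub_nonneg.2 hlow)
  rw [abs_le]
  constructor <;> linarith

end IsCellSolution

/-- **Ergodic properties of the `(N+1)`-dimensional problem (Proposition 3.1).**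
Under (H1)–(H4), for `η ≥ 0` the viscosity solution `U_η` of
`∂_τ U = L + I_s[U(τ,·,y_{N+1})] − W'(U + P·Y) + σ(τ,y)
  + η[a₀ + inf_{Y'} U(τ,Y') − U(τ,Y)]·|∂_{y_{N+1}}U + 1|`, `U(0,·)=0`,
satisfies `|U_η(τ,Y) − λ_η τ| ≤ C` for a unique `λ_η`, with `C` independent of `η`, and
`L − ‖W'‖_∞ − ‖σ‖_∞ + ηa₀ ≤ λ_η ≤ L + ‖W'‖_∞ + ‖σ‖_∞ + ηa₀`. -/
theorem ergodic_properties_Np1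
    (N : ℕ) (hN : 1 ≤ N) (s : ℝ) (hs : s ∈ Set.Ioo (0:ℝ) 1)
    (g : EN N → ℝ) (hg : H1 N g)
    (W : ℝ → ℝ) (hW : H2 W)
    (σ : ℝ → EN N → ℝ) (hσ : H3 N σ)
    (u₀ : EN N → ℝ) (hu₀ : H4 N u₀)
    (a₀ L : ℝ) (p : EN N) :
    ∃ C : ℝ, 0 < C ∧ ∀ η : ℝ, 0 ≤ η →
      ∀ U : ℝ → EN N → ℝ → ℝ,
        IsSolNp1 N s g
          (fun τ y yn v _ dyn I infv =>
            L + I - deriv W (v + ⟪p, y⟫ + yn) + σ τ y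
              + η * (a₀ + infv - v) * |dyn + 1|)
          (fun _ _ => 0) U →
        ∃ lam : ℝ,
          (∀ τ > 0, ∀ (y : EN N) (yn : ℝ), |U τ y yn - lam * τ| ≤ C) ∧
          (∀ lam' : ℝ,
            (∀ τ > 0, ∀ (y : EN N) (yn : ℝ), |U τ y yn - lam' * τ| ≤ C) → lam' = lam) ∧
          L - supW' W - supSigma N σ + η * a₀ ≤ lam ∧
          lam ≤ L + supW' W + supSigma N σ + η * a₀ := by
  obtain ⟨K, hD⟩ := exists_isCellData (hg.isLevyKernel hN hs) hW hσ
  obtain ⟨κ, hκ, hκ_le⟩ := hD.kernel.exists_le (2 * √N + 4)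
  have hAS : 0 ≤ supW' W + supSigma N σ := hD.bound_nonneg
  have hC : 0 < 2 * oscBound N κ (supW' W + supSigma N σ) + 1 + 2 * (supW' W + supSigma N σ) := by
    unfold oscBound
    positivity
  refine ⟨_, hC, fun η hη U hU => ?_⟩
  obtain ⟨hcell, h0⟩ := hU.isCellSolution
  obtain ⟨lam, ⟨hlow, hup⟩, hlam⟩ := hcell.exists_slope hD hη (fun Y => h0 Y.1 Y.2)
    fun t ht => hcell.le_add_oscBound hD hη (fun Y => h0 Y.1 Y.2) hN hκ hκ_le ht
  exact ⟨lam, fun τ hτ y yn => hlam τ hτ.le (y, yn),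
    fun lam' h' => eq_of_abs_sub_mul_le (f := fun τ => U τ 0 0)
      (fun τ hτ => hlam τ hτ.le 0) (fun τ hτ => h' τ hτ 0 0), hlow, hup⟩
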